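/- arXiv:1610.00203 — 3 statements merged into one kernel-verified Lean document; each statement's English description precedes it below -/
import Mathlib

section
/- Behavior of the corrector ψ. Assume (W), let φ be the layer solution, let L ∈ ℝ, and let ψ be a bounded C^{3,β} solution of the corrector equation −(−Δ)^s ψ = W''(φ)ψ + (L/W''(0))(W''(φ) − W''(0)) + cφ' on ℝ with ψ(x) → 0 as x → ±∞, where c = L/∫_ℝ(φ')². Then there exist constants K₂ and K₃ > 0 (depending on L) such that: if s ≥ 1/2, |ψ(x) − K₂ x/|x|^{1+2s}| ≤ K₃/|x|^{1+2s} for all |x| ≥ 1; and, for every s ∈ (0,1) and all x ∈ ℝ, |ψ'(x)| ≤ K₃/(1+|x|^{1+2s}) and |ψ''(x)| ≤ K₃/(1+|x|^{1+2s}). -/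
open MeasureTheory Filter Metric Set

noncomputable section

/-- The normalizing constant `C(1,s) = 4^s Γ(1/2+s) / (√π |Γ(−s)|)` of the fractional
Laplacian in dimension one. -/
noncomputable def C1s (s : ℝ) : ℝ :=
  4 ^ s * Real.Gamma (1/2 + s) / (Real.sqrt Real.pi * |Real.Gamma (-s)|)

/-- `I^{1,r}[φ,x] = C(1,s) ∫_{|z|≤r} (φ(x+z) − φ(x) − φ'(x)z)|z|^{−1−2s} dz`. -/
noncomputable def fracI1 (s : ℝ) (φ : ℝ → ℝ) (r x : ℝ) : ℝ :=
  C1s s * ∫ z in {z : ℝ | |z| ≤ r}, (φ (x + z) - φ x - deriv φ x * z) / |z| ^ (1 + 2*s)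

/-- `I^{2,r}[u,x] = C(1,s) ∫_{|z|>r} (u(x+z) − u(x))|z|^{−1−2s} dz`. -/
noncomputable def fracI2 (s : ℝ) (u : ℝ → ℝ) (r x : ℝ) : ℝ :=
  C1s s * ∫ z in {z : ℝ | r < |z|}, (u (x + z) - u x) / |z| ^ (1 + 2*s)

/-- The one-dimensional fractional Laplacian `−(−Δ)^s u (x)`, defined as a principal value. -/
noncomputable def fracLap (s : ℝ) (u : ℝ → ℝ) (x : ℝ) : ℝ :=
  limUnder (nhdsWithin 0 (Ioi (0:ℝ)))
    (fun ρ => C1s s * ∫ y in {y : ℝ | ρ < |y|}, (u (x + y) - u x) / |y| ^ (1 + 2*s))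

/-- The Heaviside function. -/
noncomputable def heav (x : ℝ) : ℝ := if 0 ≤ x then 1 else 0

/-- Assumption (W): `W ∈ C^{4,β}(ℝ)` for some `β ∈ (0,1)`, 1-periodic, vanishing exactly on
`ℤ`, with `α = W''(0) > 0`, and even if `s < 1/2`. -/
def WAssump (s : ℝ) (W : ℝ → ℝ) : Prop :=
  (∃ β : ℝ, β ∈ Set.Ioo (0:ℝ) 1 ∧ ContDiff ℝ 4 W ∧
    ∃ Cβ : ℝ, ∀ x y : ℝ, |iteratedDeriv 4 W x - iteratedDeriv 4 W y| ≤ Cβ * |x - y| ^ β) ∧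
  (∀ v : ℝ, W (v + 1) = W v) ∧
  (∀ k : ℤ, W (k : ℝ) = 0) ∧
  (∀ v : ℝ, (∀ k : ℤ, (k : ℝ) ≠ v) → 0 < W v) ∧
  0 < iteratedDeriv 2 W 0 ∧
  (s < 1/2 → ∀ v : ℝ, W (-v) = W v)

/-- `φ` is the layer solution: `−(−Δ)^s φ = W'(φ)`, `φ' > 0`, `φ(−∞)=0`, `φ(+∞)=1`,
`φ(0)=1/2` (it is of class `C^{4,β}`). -/
def IsLayerSolution (s : ℝ) (W φ : ℝ → ℝ) : Prop :=
  ContDiff ℝ 4 φ ∧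
  (∀ x, fracLap s φ x = deriv W (φ x)) ∧
  (∀ x, 0 < deriv φ x) ∧
  Tendsto φ atBot (nhds 0) ∧ Tendsto φ atTop (nhds 1) ∧ φ 0 = 1/2

/-- `ψ` is the (bounded, `C^{3,β}`) corrector associated with `L`:
`−(−Δ)^s ψ = W''(φ)ψ + (L/W''(0))(W''(φ) − W''(0)) + cφ'` with `c = L/∫(φ')²` and
`ψ(±∞) = 0`. -/
def IsCorrector (s L : ℝ) (W φ ψ : ℝ → ℝ) : Prop :=
  ContDiff ℝ 3 ψ ∧ (∃ M, ∀ x, |ψ x| ≤ M) ∧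
  (∀ x, fracLap s ψ x =
    iteratedDeriv 2 W (φ x) * ψ x +
    (L / iteratedDeriv 2 W 0) * (iteratedDeriv 2 W (φ x) - iteratedDeriv 2 W 0) +
    (L / ∫ y : ℝ, (deriv φ y) ^ 2) * deriv φ x) ∧
  Tendsto ψ atBot (nhds 0) ∧ Tendsto ψ atTop (nhds 0)

/-- A smooth cutoff `τ` with `0 ≤ τ ≤ 1`, `τ = 1` on `[−R,R]`, `τ = 0` outside `[−2R,2R]`. -/
def IsCutoff (R : ℝ) (τc : ℝ → ℝ) : Prop :=
  ContDiff ℝ (⊤ : ℕ∞) τc ∧ (∀ x, 0 ≤ τc x ∧ τc x ≤ 1) ∧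
  (∀ x : ℝ, |x| ≤ R → τc x = 1) ∧ (∀ x : ℝ, 2*R ≤ |x| → τc x = 0)

/-- The ansatz `s_{δ,n}^L(x) = δ^{2s}L/α + Σ_{i=−n}^n φ(x_i) − n + δ^{2s} Σ_{i=−n}^n ψ(x_i)τ(x_i)`
with `x_i = (x−i)/(δ|p₀|)` (the case `s ≥ 1/2` corresponds to `τ ≡ 1`). -/
noncomputable def ansatz (s : ℝ) (φ ψ τc : ℝ → ℝ) (α L p₀ δ : ℝ) (n : ℕ) (x : ℝ) : ℝ :=
  δ ^ (2*s) * L / α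
    + (∑ i ∈ Finset.Icc (-(n:ℤ)) (n:ℤ), φ ((x - i) / (δ * |p₀|))) - n
    + δ ^ (2*s) *
        ∑ i ∈ Finset.Icc (-(n:ℤ)) (n:ℤ),
          ψ ((x - i) / (δ * |p₀|)) * τc ((x - i) / (δ * |p₀|))

/-- The nonlinear operator `NL_L^λ[h] = λh' − δ^{2s}L − δ^{2s}|p₀|^{2s}(−(−Δ)^s h) + W'(h)`. -/
noncomputable def NLop (s δ p₀ L lam : ℝ) (W h : ℝ → ℝ) (x : ℝ) : ℝ :=
  lam * deriv h x - δ ^ (2*s) * L - δ ^ (2*s) * |p₀| ^ (2*s) * fracLap s h x + deriv W (h x)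

end

/-!
The function `(1 + x²)^{-(1/2+s)}` decays like the kernel of `−(−Δ)^s`, and its image under
`−(−Δ)^s` is bounded above by a multiple of itself. A slow dilation makes that multiple as small as
we please, so it is a supersolution of `−(−Δ)^s − A` as soon as `A` is bounded below by a positive
constant near infinity. By the maximum principle, a decaying `v` with
`−(−Δ)^s v − A v = O(|x|^{-(1+2s)})` is itself `O(|x|^{-(1+2s)})`.

Since `W''(φ) → W''(0) > 0`, this applies to the equations solved by `φ'`, `ψ'` and `ψ''`; the
decay of the derivatives that it presupposes comes from applying it first to difference quotients.
For `s ≥ 1/2`, the odd profile `p(x) = x (1 + x²)^{-(1/2+s)}` satisfies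
`−(−Δ)^s p = O(|x|^{-(1+2s)})` and is, up to a constant factor and an error of this order, the
fractional Laplacian of a step. Hence `φ` is a step minus a multiple of `p` up to
`O(|x|^{-(1+2s)})`. Expanding the corrector equation with this, for a suitable `K₂` the multiple
`K₂ p` solves it up to `O(|x|^{-(1+2s)})`, and so `ψ − K₂ p` is of that order.
-/

noncomputable section

open Asymptotics
open scoped Topology

variable {s : ℝ} {u : ℝ → ℝ}

/-! ### The principal value as an integral of second differences -/

/-- The symmetric second difference of `u` at `x` with step `y`. -/
def secondDiff (u : ℝ → ℝ) (x y : ℝ) : ℝ := u (x + y) + u (x - y) - 2 * u x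

/-- The integrand of the symmetrized fractional Laplacian; symmetrizing makes the principal value
an absolutely convergent integral over `Ioi 0`. -/
def symmIntegrand (s : ℝ) (u : ℝ → ℝ) (x y : ℝ) : ℝ := secondDiff u x y * y ^ (-(1 + 2 * s))

/-- The integrable majorant of `symmIntegrand` for bounded `C²` functions: quadratic cancellation
for small steps, boundedness for large ones. -/
def kernelMajorant (s y : ℝ) : ℝ := min 1 (y ^ 2) * y ^ (-(1 + 2 * s))

/-- Bounded functions of class `C²`, the domain on which we use the fractional Laplacian. -/
structure BoundedC2 (u : ℝ → ℝ) : Prop where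
  contDiff : ContDiff ℝ 2 u
  bounded : ∃ M, ∀ x, |u x| ≤ M

theorem C1s_pos (hs : s ∈ Ioo (0 : ℝ) 1) : 0 < C1s s := by
  obtain ⟨h0, h1⟩ := hs
  have hGamma : Real.Gamma (-s) ≠ 0 := Real.Gamma_ne_zero fun m hm ↦ by
    obtain rfl : s = m := neg_injective hm
    have := Nat.cast_pos.1 h0
    have := Nat.cast_lt_one.1 h1
    lia
  have := Real.Gamma_pos_of_pos (show 0 < 1 / 2 + s by linarith)
  unfold C1s
  positivity

theorem kernelMajorant_nonneg {y : ℝ} (hy : 0 < y) : 0 ≤ kernelMajorant s y := by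
  unfold kernelMajorant; positivity

theorem kernelMajorant_of_le_one {y : ℝ} (hy : 0 < y) (hy1 : y ≤ 1) :
    kernelMajorant s y = y ^ (1 - 2 * s) := by
  rw [kernelMajorant, min_eq_right (pow_le_one₀ hy.le hy1), ← Real.rpow_natCast,
    ← Real.rpow_add hy]
  congr 1
  push_cast
  ring

theorem kernelMajorant_of_one_le {y : ℝ} (hy : 1 ≤ y) :
    kernelMajorant s y = y ^ (-(1 + 2 * s)) := by
  rw [kernelMajorant, min_eq_left (one_le_pow₀ hy), one_mul]

theorem integrableOn_kernelMajorant (hs : s ∈ Ioo (0 : ℝ) 1) :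
    IntegrableOn (kernelMajorant s) (Ioi 0) := by
  rw [← Ioc_union_Ioi_eq_Ioi (zero_le_one' ℝ)]
  refine IntegrableOn.union ?_ ?_
  · have h := intervalIntegral.intervalIntegrable_rpow' (a := 0) (b := 1)
      (show -1 < 1 - 2 * s by linarith [hs.2])
    rw [intervalIntegrable_iff_integrableOn_Ioc_of_le zero_le_one] at h
    exact h.congr_fun (fun y hy ↦ (kernelMajorant_of_le_one hy.1 hy.2).symm) measurableSet_Ioc
  · exact (integrableOn_Ioi_rpow_of_lt (by linarith [hs.1]) one_pos).congr_fun
      (fun y hy ↦ (kernelMajorant_of_one_le (le_of_lt hy)).symm) measurableSet_Ioi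

theorem hasDerivAt_secondDiff_right {u' : ℝ → ℝ} (hu : ∀ x, HasDerivAt u (u' x) x) (x y : ℝ) :
    HasDerivAt (secondDiff u x) (u' (x + y) - u' (x - y)) y := by
  unfold secondDiff
  simpa [sub_eq_add_neg] using (((hu (x + y)).comp_const_add x y).add
    ((hu (x - y)).comp_const_sub x y)).sub_const (2 * u x)

theorem abs_secondDiff_le_of_deriv_deriv (hu : ContDiff ℝ 2 u) {x y B : ℝ} (hy : 0 ≤ y)
    (hB : ∀ t ∈ Icc (x - y) (x + y), |deriv (deriv u) t| ≤ B) :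
    |secondDiff u x y| ≤ 2 * B * y ^ 2 := by
  have hB0 : 0 ≤ B := (abs_nonneg _).trans (hB x ⟨by linarith, by linarith⟩)
  have hslope : ∀ t ∈ Icc 0 y, ‖deriv u (x + t) - deriv u (x - t)‖ ≤ B * (2 * y) := by
    rintro t ⟨ht0, hty⟩
    refine ((convex_Icc (x - y) (x + y)).norm_image_sub_le_of_norm_deriv_le
      (fun z _ ↦ hu.differentiable_deriv_two z) hB ⟨by linarith, by linarith⟩
      ⟨by linarith, by linarith⟩).trans ?_
    rw [Real.norm_eq_abs, abs_of_nonneg (by linarith)]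
    gcongr
    linarith
  have h := (convex_Icc 0 y).norm_image_sub_le_of_norm_hasDerivWithin_le
    (fun t _ ↦ (hasDerivAt_secondDiff_right
      (fun x ↦ (hu.differentiable two_ne_zero x).hasDerivAt) x t).hasDerivWithinAt)
    hslope ⟨le_rfl, hy⟩ ⟨hy, le_rfl⟩
  have h0 : secondDiff u x 0 = 0 := by simp [secondDiff, two_mul]
  rw [h0, sub_zero, sub_zero, Real.norm_eq_abs, Real.norm_eq_abs, abs_of_nonneg hy] at h
  linarith

theorem abs_secondDiff_le_of_bounded {M : ℝ} (hM : ∀ x, |u x| ≤ M) (x y : ℝ) :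
    |secondDiff u x y| ≤ 4 * M := by
  have h1 := abs_le.1 (hM (x + y))
  have h2 := abs_le.1 (hM (x - y))
  have h3 := abs_le.1 (hM x)
  unfold secondDiff
  rw [abs_le]
  constructor <;> linarith [h1.1, h1.2, h2.1, h2.2, h3.1, h3.2]

theorem abs_symmIntegrand (s : ℝ) (u : ℝ → ℝ) (x : ℝ) {y : ℝ} (hy : 0 < y) :
    |symmIntegrand s u x y| = |secondDiff u x y| * y ^ (-(1 + 2 * s)) := by
  rw [symmIntegrand, abs_mul, abs_of_pos (Real.rpow_pos_of_pos hy _)]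

theorem continuousOn_mul_rpow_Ioi (s : ℝ) {g : ℝ → ℝ} (hg : Continuous g) {ρ : ℝ} (hρ : 0 ≤ ρ) :
    ContinuousOn (fun y ↦ g y * y ^ (-(1 + 2 * s))) (Ioi ρ) := by
  refine hg.continuousOn.mul fun y hy ↦ ?_
  exact (Real.continuousAt_rpow_const y _ (Or.inl (hρ.trans_lt hy).ne')).continuousWithinAt

theorem aestronglyMeasurable_symmIntegrand (s : ℝ) (hu : Continuous u) (x : ℝ) :
    AEStronglyMeasurable (symmIntegrand s u x) (volume.restrict (Ioi 0)) :=
  (continuousOn_mul_rpow_Ioi s (by unfold secondDiff; fun_prop) le_rfl).aestronglyMeasurable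
    measurableSet_Ioi

theorem integrableOn_mul_rpow_Ioi (hs : 0 < s) {g : ℝ → ℝ} {M ρ : ℝ} (hg : Continuous g)
    (hM : ∀ y, |g y| ≤ M) (hρ : 0 < ρ) :
    IntegrableOn (fun y ↦ g y * y ^ (-(1 + 2 * s))) (Ioi ρ) := by
  have hkernel := integrableOn_Ioi_rpow_of_lt (show -(1 + 2 * s) < -1 by linarith) hρ
  refine Integrable.mono' (hkernel.const_mul M)
    ((continuousOn_mul_rpow_Ioi s hg hρ.le).aestronglyMeasurable measurableSet_Ioi)
    ((ae_restrict_mem measurableSet_Ioi).mono fun y hy ↦ ?_)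
  have hy0 : 0 < y := hρ.trans hy
  rw [norm_mul, Real.norm_of_nonneg (Real.rpow_nonneg hy0.le _)]
  gcongr
  exact hM y

theorem setIntegral_lt_abs {E : Type*} [NormedAddCommGroup E] [NormedSpace ℝ E] {f : ℝ → E}
    {ρ : ℝ} (hρ : 0 ≤ ρ) (hpos : IntegrableOn f (Ioi ρ))
    (hneg : IntegrableOn (fun y ↦ f (-y)) (Ioi ρ)) :
    ∫ y in {y : ℝ | ρ < |y|}, f y = ∫ y in Ioi ρ, (f y + f (-y)) := by
  have hset : {y : ℝ | ρ < |y|} = Ioi ρ ∪ Iio (-ρ) := by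
    ext y
    simp [lt_abs, lt_neg]
  have hdisj : Disjoint (Ioi ρ) (Iio (-ρ)) :=
    Set.disjoint_left.2 fun y (h1 : ρ < y) (h2 : y < -ρ) ↦ by linarith
  have hneg' : IntegrableOn f (Iio (-ρ)) := by simpa using hneg.comp_neg
  rw [hset, setIntegral_union hdisj measurableSet_Iio hpos hneg', ← integral_Iic_eq_integral_Iio,
    ← integral_comp_neg_Ioi, ← integral_add hpos hneg]

theorem setIntegral_lt_abs_eq_setIntegral_symmIntegrand (hs : 0 < s) (hu : Continuous u) {M : ℝ}
    (hM : ∀ x, |u x| ≤ M) (x : ℝ) {ρ : ℝ} (hρ : 0 < ρ) :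
    ∫ y in {y : ℝ | ρ < |y|}, (u (x + y) - u x) / |y| ^ (1 + 2 * s) =
      ∫ y in Ioi ρ, symmIntegrand s u x y := by
  have hkernel : ∀ (a : ℝ), ∀ y ∈ Ioi ρ, a / |y| ^ (1 + 2 * s) = a * y ^ (-(1 + 2 * s)) := by
    intro a y hy
    have hy0 : 0 < y := hρ.trans hy
    rw [abs_of_pos hy0, Real.rpow_neg hy0.le, div_eq_mul_inv]
  have hbound : ∀ z, |u z - u x| ≤ M + M := fun z ↦ (abs_sub _ _).trans (add_le_add (hM z) (hM x))
  rw [setIntegral_lt_abs hρ.le]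
  · refine setIntegral_congr_fun measurableSet_Ioi fun y hy ↦ ?_
    simp only [abs_neg, hkernel _ y hy, symmIntegrand, secondDiff, ← sub_eq_add_neg]
    ring
  · refine (integrableOn_mul_rpow_Ioi hs (g := fun y ↦ u (x + y) - u x) (by fun_prop)
      (fun y ↦ hbound _) hρ).congr_fun (fun y hy ↦ (hkernel _ y hy).symm) measurableSet_Ioi
  · refine (integrableOn_mul_rpow_Ioi hs (g := fun y ↦ u (x - y) - u x) (by fun_prop)
      (fun y ↦ hbound _) hρ).congr_fun (fun y hy ↦ ?_) measurableSet_Ioi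
    simp only [abs_neg, hkernel _ y hy, ← sub_eq_add_neg]

namespace BoundedC2

theorem continuous (hu : BoundedC2 u) : Continuous u := hu.contDiff.continuous

theorem differentiable (hu : BoundedC2 u) : Differentiable ℝ u :=
  hu.contDiff.differentiable two_ne_zero

theorem exists_abs_symmIntegrand_le (s : ℝ) (hu : BoundedC2 u) (x : ℝ) :
    ∃ D, ∀ ξ ∈ Icc (x - 1) (x + 1), ∀ y, 0 < y →
      |symmIntegrand s u ξ y| ≤ D * kernelMajorant s y := by
  obtain ⟨M, hM⟩ := hu.bounded
  obtain ⟨B, hB⟩ := isCompact_Icc.exists_bound_of_continuousOn (s := Icc (x - 2) (x + 2))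
    (hu.contDiff.continuous_iteratedDeriv 2 le_rfl).continuousOn
  simp only [iteratedDeriv_succ, iteratedDeriv_zero] at hB
  refine ⟨max (2 * B) (4 * M), fun ξ hξ y hy ↦ ?_⟩
  rw [abs_symmIntegrand s u ξ hy, kernelMajorant, ← mul_assoc]
  gcongr
  rcases le_total y 1 with h | h
  · rw [min_eq_right (pow_le_one₀ hy.le h)]
    refine (abs_secondDiff_le_of_deriv_deriv hu.contDiff hy.le (B := B) fun t ht ↦ ?_).trans
      (by gcongr; exact le_max_left _ _)
    exact hB t ⟨by linarith [ht.1, hξ.1], by linarith [ht.2, hξ.2]⟩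
  · rw [min_eq_left (one_le_pow₀ h), mul_one]
    exact (abs_secondDiff_le_of_bounded hM ξ y).trans (le_max_right _ _)

theorem integrableOn_symmIntegrand (hs : s ∈ Ioo (0 : ℝ) 1) (hu : BoundedC2 u) (x : ℝ) :
    IntegrableOn (symmIntegrand s u x) (Ioi 0) := by
  obtain ⟨D, hD⟩ := hu.exists_abs_symmIntegrand_le s x
  exact Integrable.mono' ((integrableOn_kernelMajorant hs).const_mul D)
    (aestronglyMeasurable_symmIntegrand s hu.continuous x)
    ((ae_restrict_mem measurableSet_Ioi).mono fun y hy ↦ hD x ⟨by linarith, by linarith⟩ y hy)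

theorem fracLap_eq (hs : s ∈ Ioo (0 : ℝ) 1) (hu : BoundedC2 u) (x : ℝ) :
    fracLap s u x = C1s s * ∫ y in Ioi 0, symmIntegrand s u x y := by
  obtain ⟨M, hM⟩ := hu.bounded
  have hcover : AECover (volume.restrict (Ioi (0 : ℝ))) (𝓝[>] 0) (fun ρ : ℝ ↦ Ioi ρ) :=
    aecover_Ioi_of_Ioi (tendsto_id.mono_left nhdsWithin_le_nhds)
  have hlim :=
    hcover.integral_tendsto_of_countably_generated (hu.integrableOn_symmIntegrand hs x)
  refine Tendsto.limUnder_eq ((hlim.congr' ?_).const_mul _)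
  filter_upwards [self_mem_nhdsWithin] with ρ hρ
  rw [Measure.restrict_restrict measurableSet_Ioi,
    inter_eq_left.2 (Ioi_subset_Ioi (le_of_lt hρ)),
    setIntegral_lt_abs_eq_setIntegral_symmIntegrand hs.1 hu.continuous hM x hρ]

end BoundedC2

/-! ### Calculus of the fractional Laplacian -/

theorem fracLap_comp_add_const (s : ℝ) (u : ℝ → ℝ) (h x : ℝ) :
    fracLap s (fun x ↦ u (x + h)) x = fracLap s u (x + h) := by
  simp only [fracLap, add_right_comm]

namespace BoundedC2

variable {v : ℝ → ℝ}

theorem add (hu : BoundedC2 u) (hv : BoundedC2 v) : BoundedC2 (fun x ↦ u x + v x) := by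
  obtain ⟨M, hM⟩ := hu.bounded
  obtain ⟨N, hN⟩ := hv.bounded
  exact ⟨hu.contDiff.add hv.contDiff, M + N,
    fun x ↦ (abs_add_le _ _).trans (add_le_add (hM x) (hN x))⟩

theorem const_mul (hu : BoundedC2 u) (a : ℝ) : BoundedC2 (fun x ↦ a * u x) := by
  obtain ⟨M, hM⟩ := hu.bounded
  refine ⟨contDiff_const.mul hu.contDiff, |a| * M, fun x ↦ ?_⟩
  rw [abs_mul]
  gcongr
  exact hM x

theorem neg (hu : BoundedC2 u) : BoundedC2 (fun x ↦ -u x) := by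
  simpa using hu.const_mul (-1)

theorem sub (hu : BoundedC2 u) (hv : BoundedC2 v) : BoundedC2 (fun x ↦ u x - v x) := by
  simpa only [sub_eq_add_neg] using hu.add hv.neg

theorem comp_add_const (hu : BoundedC2 u) (h : ℝ) : BoundedC2 (fun x ↦ u (x + h)) :=
  ⟨hu.contDiff.comp (contDiff_id.add contDiff_const), hu.bounded.imp fun _ hM _ ↦ hM _⟩

theorem comp_const_mul (hu : BoundedC2 u) (a : ℝ) : BoundedC2 (fun x ↦ u (a * x)) :=
  ⟨hu.contDiff.comp (contDiff_const.mul contDiff_id), hu.bounded.imp fun _ hM _ ↦ hM _⟩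

theorem fracLap_add (hs : s ∈ Ioo (0 : ℝ) 1) (hu : BoundedC2 u) (hv : BoundedC2 v) (x : ℝ) :
    fracLap s (fun x ↦ u x + v x) x = fracLap s u x + fracLap s v x := by
  rw [(hu.add hv).fracLap_eq hs, hu.fracLap_eq hs, hv.fracLap_eq hs, ← mul_add,
    ← integral_add (hu.integrableOn_symmIntegrand hs x) (hv.integrableOn_symmIntegrand hs x)]
  congr 2 with y
  simp only [symmIntegrand, secondDiff]
  ring

theorem fracLap_const_mul (hs : s ∈ Ioo (0 : ℝ) 1) (hu : BoundedC2 u) (a x : ℝ) :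
    fracLap s (fun x ↦ a * u x) x = a * fracLap s u x := by
  rw [(hu.const_mul a).fracLap_eq hs, hu.fracLap_eq hs, mul_left_comm, ← integral_const_mul a]
  congr 2 with y
  simp only [symmIntegrand, secondDiff]
  ring

theorem fracLap_neg (hs : s ∈ Ioo (0 : ℝ) 1) (hu : BoundedC2 u) (x : ℝ) :
    fracLap s (fun x ↦ -u x) x = -fracLap s u x := by
  simpa using hu.fracLap_const_mul hs (-1) x

theorem fracLap_sub (hs : s ∈ Ioo (0 : ℝ) 1) (hu : BoundedC2 u) (hv : BoundedC2 v) (x : ℝ) :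
    fracLap s (fun x ↦ u x - v x) x = fracLap s u x - fracLap s v x := by
  simpa only [sub_eq_add_neg, hv.fracLap_neg hs] using hu.fracLap_add hs hv.neg x

theorem fracLap_comp_const_mul (hs : s ∈ Ioo (0 : ℝ) 1) (hu : BoundedC2 u) {ε : ℝ} (hε : 0 < ε)
    (x : ℝ) : fracLap s (fun x ↦ u (ε * x)) x = ε ^ (2 * s) * fracLap s u (ε * x) := by
  have hscale : ∀ y ∈ Ioi (0 : ℝ), symmIntegrand s (fun x ↦ u (ε * x)) x y =
      ε ^ (2 * s) * (ε * symmIntegrand s u (ε * x) (ε * y)) := by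
    intro y hy
    have hexp : ε ^ (2 * s) * (ε * ε ^ (-(1 + 2 * s))) = 1 := by
      rw [← Real.rpow_one_add' hε.le (by linarith [hs.1]), ← Real.rpow_add hε]
      simp
    have hdiff : secondDiff (fun x ↦ u (ε * x)) x y = secondDiff u (ε * x) (ε * y) := by
      simp only [secondDiff, mul_add, mul_sub]
    rw [symmIntegrand, symmIntegrand, hdiff, Real.mul_rpow hε.le (le_of_lt hy)]
    linear_combination (-secondDiff u (ε * x) (ε * y) * y ^ (-(1 + 2 * s))) * hexp
  rw [(hu.comp_const_mul ε).fracLap_eq hs, hu.fracLap_eq hs,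
    setIntegral_congr_fun measurableSet_Ioi hscale, integral_const_mul, integral_const_mul,
    integral_comp_mul_left_Ioi (fun y ↦ symmIntegrand s u (ε * x) y) 0 hε, mul_zero, smul_eq_mul,
    mul_inv_cancel_left₀ hε.ne']
  ring

theorem hasDerivAt_fracLap (hs : s ∈ Ioo (0 : ℝ) 1) (hu : BoundedC2 u) (hu' : BoundedC2 (deriv u))
    (x : ℝ) : HasDerivAt (fracLap s u) (fracLap s (deriv u) x) x := by
  obtain ⟨D, hD⟩ := hu'.exists_abs_symmIntegrand_le s x
  have hderiv : ∀ ξ y, HasDerivAt (fun ξ ↦ symmIntegrand s u ξ y)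
      (symmIntegrand s (deriv u) ξ y) ξ := fun ξ y ↦
    ((((hu.differentiable (ξ + y)).hasDerivAt.comp_add_const ξ y).add
      ((hu.differentiable (ξ - y)).hasDerivAt.comp_sub_const ξ y)).sub
      ((hu.differentiable ξ).hasDerivAt.const_mul 2)).mul_const _
  have hint : HasDerivAt (fun ξ ↦ ∫ y in Ioi 0, symmIntegrand s u ξ y)
      (∫ y in Ioi 0, symmIntegrand s (deriv u) x y) x :=
    (hasDerivAt_integral_of_dominated_loc_of_deriv_le
      (Icc_mem_nhds (by linarith) (by linarith))
      (Eventually.of_forall fun ξ ↦ aestronglyMeasurable_symmIntegrand s hu.continuous ξ)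
      (hu.integrableOn_symmIntegrand hs x)
      (aestronglyMeasurable_symmIntegrand s hu'.continuous x)
      ((ae_restrict_mem measurableSet_Ioi).mono fun y hy ξ hξ ↦ hD ξ hξ y hy)
      ((integrableOn_kernelMajorant hs).const_mul D)
      (Eventually.of_forall fun y ξ _ ↦ hderiv ξ y)).2
  rw [hu'.fracLap_eq hs, funext (hu.fracLap_eq hs)]
  exact hint.const_mul _

theorem fracLap_nonneg_of_isMin (hs : s ∈ Ioo (0 : ℝ) 1) (hu : BoundedC2 u) {x : ℝ}
    (hx : ∀ y, u x ≤ u y) : 0 ≤ fracLap s u x := by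
  rw [hu.fracLap_eq hs]
  refine mul_nonneg (C1s_pos hs).le (setIntegral_nonneg measurableSet_Ioi fun y hy ↦ ?_)
  refine mul_nonneg ?_ (Real.rpow_pos_of_pos hy _).le
  unfold secondDiff
  linarith [hx (x + y), hx (x - y)]

theorem fracLap_neg_arg (hs : s ∈ Ioo (0 : ℝ) 1) (hu : BoundedC2 u) {m : ℝ}
    (hodd : ∀ t, u (-t) = m - u t) (x : ℝ) : fracLap s u (-x) = -fracLap s u x := by
  rw [hu.fracLap_eq hs, hu.fracLap_eq hs, ← mul_neg, ← integral_neg]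
  congr 2 with y
  have hneg : secondDiff u (-x) y = -secondDiff u x y := by
    rw [secondDiff, secondDiff, show -x + y = -(x - y) by ring, show -x - y = -(x + y) by ring,
      hodd, hodd, hodd]
    ring
  rw [symmIntegrand, symmIntegrand, hneg, neg_mul]

end BoundedC2

/-! ### The maximum principle -/

theorem exists_forall_le_of_tendsto_zero {w : ℝ → ℝ} (hw : Continuous w)
    (h0 : Tendsto w (cocompact ℝ) (𝓝 0)) {x : ℝ} (hx : w x < 0) :
    ∃ z, w z < 0 ∧ ∀ y, w z ≤ w y := by
  obtain ⟨z, hz⟩ := hw.exists_forall_le' x ((h0.eventually (lt_mem_nhds hx)).mono fun _ ↦ le_of_lt)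
  exact ⟨z, (hz x).trans_lt hx, hz⟩

theorem BoundedC2.nonneg_of_fracLap_neg (hs : s ∈ Ioo (0 : ℝ) 1) (hu : BoundedC2 u)
    (h0 : Tendsto u (cocompact ℝ) (𝓝 0)) (hneg : ∀ x, u x < 0 → fracLap s u x < 0) (x : ℝ) :
    0 ≤ u x := by
  by_contra! hx
  obtain ⟨z, hz, hmin⟩ := exists_forall_le_of_tendsto_zero hu.continuous h0 hx
  exact (hneg z hz).not_ge (hu.fracLap_nonneg_of_isMin hs hmin)

/-! ### The algebraic barrier -/

theorem one_add_sq_pos (x : ℝ) : 0 < 1 + x ^ 2 := by positivity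

theorem hasDerivAt_one_add_sq_rpow (k x : ℝ) :
    HasDerivAt (fun x : ℝ ↦ (1 + x ^ 2) ^ k) (2 * k * x * (1 + x ^ 2) ^ (k - 1)) x := by
  have h : HasDerivAt (fun x : ℝ ↦ 1 + x ^ 2) (2 * x) x := by
    simpa using (hasDerivAt_pow 2 x).const_add 1
  exact (h.rpow_const (p := k) (Or.inl (one_add_sq_pos x).ne')).congr_deriv (by ring)

theorem deriv_one_add_sq_rpow (k : ℝ) :
    deriv (fun x : ℝ ↦ (1 + x ^ 2) ^ k) = fun x ↦ 2 * k * x * (1 + x ^ 2) ^ (k - 1) :=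
  funext fun x ↦ (hasDerivAt_one_add_sq_rpow k x).deriv

theorem contDiff_one_add_sq_rpow (k : ℝ) {n : WithTop ℕ∞} :
    ContDiff ℝ n (fun x : ℝ ↦ (1 + x ^ 2) ^ k) :=
  ContDiff.rpow_const_of_ne (by fun_prop) fun x ↦ (one_add_sq_pos x).ne'

theorem abs_deriv_deriv_one_add_sq_rpow_le (k x : ℝ) :
    |deriv (deriv fun x : ℝ ↦ (1 + x ^ 2) ^ k) x| ≤
      (2 * |k| + 4 * |k * (k - 1)|) * (1 + x ^ 2) ^ (k - 1) := by
  have h : HasDerivAt (fun x : ℝ ↦ 2 * k * x * (1 + x ^ 2) ^ (k - 1))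
      (2 * k * (1 + x ^ 2) ^ (k - 1) +
        2 * k * x * (2 * (k - 1) * x * (1 + x ^ 2) ^ (k - 1 - 1))) x :=
    (((hasDerivAt_id x).const_mul (2 * k)).mul
      (hasDerivAt_one_add_sq_rpow (k - 1) x)).congr_deriv (by simp)
  have hpow : (1 + x ^ 2) ^ (k - 1) = (1 + x ^ 2) ^ (k - 1 - 1) * (1 + x ^ 2) := by
    rw [← Real.rpow_add_one (one_add_sq_pos x).ne', sub_add_cancel]
  have hpos : 0 ≤ (1 + x ^ 2) ^ (k - 1 - 1) := by positivity
  have hsplit : 2 * k * (1 + x ^ 2) ^ (k - 1) +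
      2 * k * x * (2 * (k - 1) * x * (1 + x ^ 2) ^ (k - 1 - 1)) =
      2 * k * (1 + x ^ 2) ^ (k - 1) + 4 * (k * (k - 1)) * (x ^ 2 * (1 + x ^ 2) ^ (k - 1 - 1)) := by
    ring
  rw [deriv_one_add_sq_rpow, h.deriv, hsplit]
  refine (abs_add_le _ _).trans ?_
  rw [abs_mul, abs_mul, abs_mul, abs_mul (4 : ℝ), abs_of_nonneg (by positivity :
    0 ≤ (1 + x ^ 2) ^ (k - 1)), abs_of_nonneg (by positivity :
    0 ≤ x ^ 2 * (1 + x ^ 2) ^ (k - 1 - 1)), abs_two, Nat.abs_ofNat, add_mul]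
  gcongr
  rw [hpow]
  nlinarith

/-- The barrier `(1 + x²)^{-(1+2s)/2}`, a smooth function comparable to the kernel
`|x|^{-(1+2s)}` at infinity. -/
def barrier (s x : ℝ) : ℝ := (1 + x ^ 2) ^ (-(1 / 2 + s))

theorem barrier_pos (s x : ℝ) : 0 < barrier s x := Real.rpow_pos_of_pos (one_add_sq_pos x) _

theorem barrier_le_one (hs : 0 < s) (x : ℝ) : barrier s x ≤ 1 :=
  Real.rpow_le_one_of_one_le_of_nonpos (by nlinarith [sq_nonneg x]) (by linarith)

theorem barrier_neg_arg (s x : ℝ) : barrier s (-x) = barrier s x := by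
  rw [barrier, neg_sq, barrier]

theorem barrier_boundedC2 (hs : 0 < s) : BoundedC2 (barrier s) :=
  ⟨contDiff_one_add_sq_rpow _, 1, fun x ↦ by
    rw [abs_of_pos (barrier_pos s x)]
    exact barrier_le_one hs x⟩

theorem barrier_tendsto_zero (hs : 0 < s) : Tendsto (barrier s) (cocompact ℝ) (𝓝 0) := by
  have hsq : Tendsto (fun x : ℝ ↦ 1 + x ^ 2) (cocompact ℝ) atTop :=
    tendsto_atTop_add_const_left _ _
      (((tendsto_pow_atTop two_ne_zero).comp tendsto_norm_cocompact_atTop).congr fun x ↦ by simp)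
  exact (tendsto_rpow_neg_atTop (by linarith : 0 < 1 / 2 + s)).comp hsq

theorem integrable_barrier (hs : 0 < s) : Integrable (barrier s) := by
  have h := integrable_rpow_neg_one_add_norm_sq (E := ℝ) (μ := volume) (r := 1 + 2 * s)
    (by simp [hs])
  refine h.congr (Eventually.of_forall fun x ↦ ?_)
  simp only [barrier, Real.norm_eq_abs, sq_abs]
  congr 1
  ring

theorem rpow_neg_le_mul_rpow_neg {A B c p : ℝ} (hA : 0 < A) (hB : 0 < B) (hc : 0 < c)
    (hp : 0 ≤ p) (h : A ≤ c * B) : B ^ (-p) ≤ c ^ p * A ^ (-p) := by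
  have hcp : 0 < c ^ p := Real.rpow_pos_of_pos hc p
  have := Real.rpow_le_rpow_of_nonpos hA h (neg_nonpos.2 hp)
  rwa [Real.mul_rpow hc.le hB.le, Real.rpow_neg hc.le, inv_mul_le_iff₀ hcp] at this

theorem barrier_le_mul_barrier (hs : 0 < s) {c x z : ℝ} (hc : 0 < c)
    (h : 1 + x ^ 2 ≤ c * (1 + z ^ 2)) : barrier s z ≤ c ^ (1 / 2 + s) * barrier s x :=
  rpow_neg_le_mul_rpow_neg (one_add_sq_pos x) (one_add_sq_pos z) hc (by linarith) h

theorem abs_rpow_eq_sq_rpow (s x : ℝ) : |x| ^ (-(1 + 2 * s)) = (x ^ 2) ^ (-(1 / 2 + s)) := by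
  rw [← sq_abs, ← Real.rpow_natCast |x| 2, ← Real.rpow_mul (abs_nonneg x)]
  congr 1
  push_cast
  ring

theorem barrier_le_abs_rpow (hs : 0 < s) {x : ℝ} (hx : x ≠ 0) :
    barrier s x ≤ |x| ^ (-(1 + 2 * s)) := by
  rw [abs_rpow_eq_sq_rpow]
  exact Real.rpow_le_rpow_of_nonpos (by positivity) (by linarith) (by linarith)

theorem abs_rpow_le_mul_barrier (hs : 0 < s) {c x y : ℝ} (hc : 0 < c) (hy : y ≠ 0)
    (h : 1 + x ^ 2 ≤ c * y ^ 2) :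
    |y| ^ (-(1 + 2 * s)) ≤ c ^ (1 / 2 + s) * barrier s x := by
  rw [abs_rpow_eq_sq_rpow]
  exact rpow_neg_le_mul_rpow_neg (one_add_sq_pos x) (by positivity) hc (by linarith) h

theorem barrier_le_of_abs_sub_le_one (hs : 0 < s) {x t : ℝ} (h : |t - x| ≤ 1) :
    barrier s t ≤ 3 ^ (1 / 2 + s) * barrier s x := by
  refine barrier_le_mul_barrier hs three_pos ?_
  nlinarith [sq_nonneg (t + (t - x)), (sq_le_one_iff_abs_le_one _).2 h]

theorem abs_deriv_deriv_barrier_le (s : ℝ) :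
    ∃ B, 0 ≤ B ∧ ∀ x, |deriv (deriv (barrier s)) x| ≤ B * barrier s x := by
  set k : ℝ := -(1 / 2 + s)
  refine ⟨2 * |k| + 4 * |k * (k - 1)|, by positivity, fun x ↦ ?_⟩
  refine (abs_deriv_deriv_one_add_sq_rpow_le k x).trans ?_
  rw [barrier]
  gcongr
  · exact le_add_of_nonneg_right (sq_nonneg x)
  · exact sub_le_self k zero_le_one

theorem symmIntegrand_barrier_le_of_le_one (hs : 0 < s) : ∃ A, ∀ x y, 0 < y → y ≤ 1 →
    symmIntegrand s (barrier s) x y ≤ A * barrier s x * kernelMajorant s y := by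
  obtain ⟨B, hB, hBle⟩ := abs_deriv_deriv_barrier_le s
  refine ⟨2 * B * 3 ^ (1 / 2 + s), fun x y hy hy1 ↦ ?_⟩
  have hdiff : |secondDiff (barrier s) x y| ≤
      2 * (B * (3 ^ (1 / 2 + s) * barrier s x)) * y ^ 2 := by
    refine abs_secondDiff_le_of_deriv_deriv (barrier_boundedC2 hs).contDiff hy.le fun t ht ↦ ?_
    refine (hBle t).trans ?_
    gcongr
    exact barrier_le_of_abs_sub_le_one hs (abs_le.2 ⟨by linarith [ht.1], by linarith [ht.2]⟩)
  rw [symmIntegrand, kernelMajorant, min_eq_right (pow_le_one₀ hy.le hy1), ← mul_assoc]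
  gcongr
  linarith [le_abs_self (secondDiff (barrier s) x y)]

/-- In the long range either `z` is comparable to `x`, or the jump `y` from `x` to `z` is. -/
theorem barrier_mul_rpow_le (hs : 0 < s) {x y z : ℝ} (hy : 1 < y) (hz : |x| ≤ |z| + y) :
    barrier s z * y ^ (-(1 + 2 * s)) ≤
      5 ^ (1 / 2 + s) * barrier s x * (barrier s z + kernelMajorant s y) := by
  have hy0 : 0 < y := by linarith
  have hbx := barrier_pos s x
  have hbz := barrier_pos s z
  rw [kernelMajorant_of_one_le hy.le, mul_add]
  rcases le_total (|x| / 2) |z| with h | h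
  · have hcmp : barrier s z ≤ 5 ^ (1 / 2 + s) * barrier s x := by
      refine barrier_le_mul_barrier hs (by norm_num) ?_
      nlinarith [pow_le_pow_left₀ (by positivity) h 2, sq_abs x, sq_abs z, sq_nonneg z]
    exact (mul_le_mul_of_nonneg_right hcmp (by positivity)).trans
      (le_add_of_nonneg_left (by positivity))
  · have hcmp : y ^ (-(1 + 2 * s)) ≤ 5 ^ (1 / 2 + s) * barrier s x := by
      have hyx : |x| / 2 ≤ y := by linarith
      rw [← abs_of_pos hy0]
      refine abs_rpow_le_mul_barrier hs (by norm_num) hy0.ne' ?_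
      nlinarith [pow_le_pow_left₀ (by positivity) hyx 2, sq_abs x]
    rw [mul_comm (barrier s z)]
    exact (mul_le_mul_of_nonneg_right hcmp hbz.le).trans
      (le_add_of_nonneg_right (by positivity))

theorem symmIntegrand_barrier_le_of_one_lt (hs : 0 < s) {x y : ℝ} (hy : 1 < y) :
    symmIntegrand s (barrier s) x y ≤ 2 * 5 ^ (1 / 2 + s) * barrier s x *
      (kernelMajorant s y + (barrier s (x + y) + barrier s (x - y))) := by
  have hy0 : 0 < y := by linarith
  have hplus := barrier_mul_rpow_le hs (x := x) (z := x + y) hy (by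
    simpa [abs_of_pos hy0] using abs_sub (x + y) y)
  have hminus := barrier_mul_rpow_le hs (x := x) (z := x - y) hy (by
    simpa [abs_of_pos hy0] using abs_add_le (x - y) y)
  have hdrop : symmIntegrand s (barrier s) x y ≤ barrier s (x + y) * y ^ (-(1 + 2 * s)) +
      barrier s (x - y) * y ^ (-(1 + 2 * s)) := by
    have : 0 ≤ barrier s x * y ^ (-(1 + 2 * s)) :=
      mul_nonneg (barrier_pos s x).le (Real.rpow_nonneg hy0.le _)
    unfold symmIntegrand secondDiff
    linarith
  have hextra : 0 ≤ 5 ^ (1 / 2 + s) * barrier s x * (barrier s (x + y) + barrier s (x - y)) := by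
    have := barrier_pos s x
    have := barrier_pos s (x + y)
    have := barrier_pos s (x - y)
    positivity
  linarith

theorem symmIntegrand_barrier_le (hs : 0 < s) : ∃ A, ∀ x y, 0 < y →
    symmIntegrand s (barrier s) x y ≤
      A * barrier s x * (kernelMajorant s y + (barrier s (x + y) + barrier s (x - y))) := by
  obtain ⟨A, hnear⟩ := symmIntegrand_barrier_le_of_le_one hs
  refine ⟨max A (2 * 5 ^ (1 / 2 + s)), fun x y hy ↦ ?_⟩
  have hbx := barrier_pos s x
  have hbp := barrier_pos s (x + y)
  have hbm := barrier_pos s (x - y)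
  have hk := kernelMajorant_nonneg (s := s) hy
  rcases le_or_gt y 1 with h | h
  · refine (hnear x y hy h).trans ?_
    gcongr
    · exact le_max_left _ _
    · linarith
  · refine (symmIntegrand_barrier_le_of_one_lt hs h).trans ?_
    gcongr
    exact le_max_right _ _

theorem setIntegral_Ioi_add_sub {f : ℝ → ℝ} (hf : Integrable f) (x : ℝ) :
    ∫ y in Ioi 0, (f (x + y) + f (x - y)) = ∫ y, f y := by
  have hreflect : ∫ y in Ioi 0, f (x - y) = ∫ y in Iic 0, f (x + y) := by
    simpa [sub_eq_add_neg] using integral_comp_neg_Ioi 0 fun y ↦ f (x + y)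
  rw [integral_add (hf.comp_add_left x).integrableOn (hf.comp_sub_left x).integrableOn, hreflect,
    add_comm, intervalIntegral.integral_Iic_add_Ioi (hf.comp_add_left x).integrableOn
      (hf.comp_add_left x).integrableOn, integral_add_left_eq_self f x]

theorem fracLap_barrier_le (hs : s ∈ Ioo (0 : ℝ) 1) :
    ∃ C, ∀ x, fracLap s (barrier s) x ≤ C * barrier s x := by
  obtain ⟨A, hle⟩ := symmIntegrand_barrier_le hs.1
  have hb := integrable_barrier hs.1
  refine ⟨C1s s * (A * ((∫ y in Ioi 0, kernelMajorant s y) + ∫ y, barrier s y)), fun x ↦ ?_⟩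
  have htranslates : IntegrableOn (fun y ↦ barrier s (x + y) + barrier s (x - y)) (Ioi 0) :=
    (hb.comp_add_left x).integrableOn.add (hb.comp_sub_left x).integrableOn
  calc fracLap s (barrier s) x
      = C1s s * ∫ y in Ioi 0, symmIntegrand s (barrier s) x y :=
        (barrier_boundedC2 hs.1).fracLap_eq hs x
    _ ≤ C1s s * ∫ y in Ioi 0, A * barrier s x *
          (kernelMajorant s y + (barrier s (x + y) + barrier s (x - y))) := by
        gcongr C1s s * ?_
        · exact (C1s_pos hs).le
        · exact setIntegral_mono_on ((barrier_boundedC2 hs.1).integrableOn_symmIntegrand hs x)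
            (((integrableOn_kernelMajorant hs).add htranslates).const_mul _) measurableSet_Ioi
            fun y hy ↦ hle x y hy
    _ = C1s s * (A * ((∫ y in Ioi 0, kernelMajorant s y) + ∫ y, barrier s y)) * barrier s x := by
        rw [integral_const_mul, integral_add (integrableOn_kernelMajorant hs) htranslates,
          setIntegral_Ioi_add_sub hb]
        ring

/-- A slow dilation `barrier s (ε x)` gains the factor `ε ^ (2s)` in the fractional Laplacian. -/
theorem exists_supersolution (hs : s ∈ Ioo (0 : ℝ) 1) {a₀ : ℝ} (ha₀ : 0 < a₀) :
    ∃ b : ℝ → ℝ, BoundedC2 b ∧ Tendsto b (cocompact ℝ) (𝓝 0) ∧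
      (∀ x, fracLap s b x ≤ a₀ * b x) ∧ (∀ x, barrier s x ≤ b x) ∧
      ∃ C, ∀ x, b x ≤ C * barrier s x := by
  obtain ⟨C, hC⟩ := fracLap_barrier_le hs
  have hlim : Tendsto (fun ε : ℝ ↦ ε ^ (2 * s) * C) (𝓝[>] 0) (𝓝 0) := by
    have h := ((Real.continuousAt_rpow_const 0 (2 * s)
      (Or.inr (by linarith [hs.1]))).tendsto.mul_const C).mono_left
        (nhdsWithin_le_nhds (s := Ioi 0))
    rwa [Real.zero_rpow (by linarith [hs.1]), zero_mul] at h
  obtain ⟨ε, hεC, hε0, hε1⟩ := ((hlim.eventually (gt_mem_nhds ha₀)).and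
    (Ioo_mem_nhdsGT (zero_lt_one' ℝ))).exists
  have hb := barrier_boundedC2 hs.1
  have hsq : ∀ x : ℝ, (ε * x) ^ 2 ≤ x ^ 2 := fun x ↦ by
    rw [mul_pow]
    exact mul_le_of_le_one_left (sq_nonneg x) (pow_le_one₀ hε0.le hε1.le)
  refine ⟨fun x ↦ barrier s (ε * x), hb.comp_const_mul ε, ?_, fun x ↦ ?_, fun x ↦ ?_,
    (ε⁻¹ ^ 2) ^ (1 / 2 + s), fun x ↦ ?_⟩
  · exact (barrier_tendsto_zero hs.1).comp
      (Homeomorph.mulLeft₀ ε hε0.ne').isClosedEmbedding.tendsto_cocompact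
  · rw [hb.fracLap_comp_const_mul hs hε0]
    calc ε ^ (2 * s) * fracLap s (barrier s) (ε * x)
        ≤ ε ^ (2 * s) * (C * barrier s (ε * x)) := by gcongr; exact hC _
      _ = ε ^ (2 * s) * C * barrier s (ε * x) := by ring
      _ ≤ a₀ * barrier s (ε * x) := by gcongr; exact (barrier_pos s _).le
  · exact Real.rpow_le_rpow_of_nonpos (one_add_sq_pos _) (by linarith [hsq x])
      (by linarith [hs.1])
  · refine barrier_le_mul_barrier hs.1 (by positivity) ?_
    have : ε⁻¹ ^ 2 * (1 + (ε * x) ^ 2) = ε⁻¹ ^ 2 + x ^ 2 := by field_simp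
    rw [this]
    gcongr
    exact one_le_pow₀ ((one_le_inv₀ hε0).2 hε1.le)

/-! ### Decay at the rate of the barrier -/

theorem eventually_cocompact_iff {p : ℝ → Prop} :
    (∀ᶠ x in cocompact ℝ, p x) ↔ ∃ R, ∀ x, R ≤ |x| → p x := by
  simpa [cobounded_eq_cocompact] using (hasBasis_cobounded_norm (E := ℝ)).eventually_iff

theorem isBigO_top_of_isBigO_cocompact {X E F : Type*} [TopologicalSpace X]
    [SeminormedAddCommGroup E] [NormedAddCommGroup F] {f : X → E} {g : X → F} (hf : Continuous f)
    (hg : Continuous g) (hg0 : ∀ x, g x ≠ 0) (h : f =O[cocompact X] g) : f =O[⊤] g := by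
  obtain ⟨C, hC⟩ := h.bound
  obtain ⟨K, hK, hCK⟩ := mem_cocompact.1 hC
  obtain ⟨B, hB⟩ := hK.exists_bound_of_continuousOn (f := fun x ↦ ‖f x‖ / ‖g x‖)
    (hf.norm.div hg.norm fun x ↦ norm_ne_zero_iff.2 (hg0 x)).continuousOn
  refine isBigO_top.2 ⟨max B C, fun x ↦ ?_⟩
  by_cases hx : x ∈ K
  · have h' := (le_abs_self _).trans (hB x hx)
    rw [div_le_iff₀ (norm_pos_iff.2 (hg0 x))] at h'
    exact h'.trans (by gcongr; exact le_max_left _ _)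
  · exact (hCK hx).trans (by gcongr; exact le_max_right _ _)

theorem isBigO_top_barrier_iff {v : ℝ → ℝ} :
    v =O[⊤] barrier s ↔ ∃ C, ∀ x, |v x| ≤ C * barrier s x := by
  simp only [isBigO_top, Real.norm_eq_abs, abs_of_pos (barrier_pos s _)]

theorem tendsto_zero_of_isBigO_barrier (hs : 0 < s) {v : ℝ → ℝ} (h : v =O[⊤] barrier s) :
    Tendsto v (cocompact ℝ) (𝓝 0) :=
  (h.mono le_top).trans_tendsto (barrier_tendsto_zero hs)

theorem barrier_isBigO_one (hs : 0 < s) : barrier s =O[⊤] fun _ ↦ (1 : ℝ) :=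
  isBigO_top.2 ⟨1, fun x ↦ by
    rw [Real.norm_of_nonneg (barrier_pos s x).le, norm_one, one_mul]
    exact barrier_le_one hs x⟩

theorem boundedC2_of_isBigO_one (hu : ContDiff ℝ 2 u) (h : u =O[⊤] fun _ ↦ (1 : ℝ)) :
    BoundedC2 u :=
  ⟨hu, by simpa using isBigO_top.1 h⟩

theorem BoundedC2.isBigO_one (hu : BoundedC2 u) : u =O[⊤] fun _ ↦ (1 : ℝ) :=
  isBigO_top.2 (by simpa using hu.bounded)

theorem boundedC2_of_tendsto {l₁ l₂ : ℝ} (hu : ContDiff ℝ 2 u) (hbot : Tendsto u atBot (𝓝 l₁))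
    (htop : Tendsto u atTop (𝓝 l₂)) : BoundedC2 u := by
  refine boundedC2_of_isBigO_one hu
    (isBigO_top_of_isBigO_cocompact hu.continuous continuous_const (fun _ ↦ one_ne_zero) ?_)
  rw [cocompact_eq_atBot_atTop, isBigO_sup]
  exact ⟨hbot.isBigO_one ℝ, htop.isBigO_one ℝ⟩

/-- The constant depends on `v` only through `M` and `G`; this uniformity is what allows a passage
to the limit in difference quotients. -/
theorem exists_forall_le_mul_barrier (hs : s ∈ Ioo (0 : ℝ) 1) {a₀ : ℝ} (ha₀ : 0 < a₀)
    (R M G : ℝ) : ∃ K, ∀ v : ℝ → ℝ, BoundedC2 v → Tendsto v (cocompact ℝ) (𝓝 0) →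
      (∀ x, |x| ≤ R → v x ≤ M) →
      (∀ x, R < |x| → ∃ a, a₀ ≤ a ∧ a * v x - G * barrier s x ≤ fracLap s v x) →
      ∀ x, v x ≤ K * barrier s x := by
  obtain ⟨b, hb, hb0, hsuper, hge, C, hle⟩ := exists_supersolution hs (half_pos ha₀)
  set K : ℝ := max (|M| / barrier s R) (|G| / (a₀ / 2))
  have hKM : |M| ≤ K * barrier s R := (div_le_iff₀ (barrier_pos s R)).1 (le_max_left _ _)
  have hKG : |G| ≤ K * (a₀ / 2) := (div_le_iff₀ (half_pos ha₀)).1 (le_max_right _ _)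
  have hK : 0 ≤ K := le_max_of_le_right (by positivity)
  refine ⟨K * C, fun v hv hv0 hin hout x ↦ ?_⟩
  suffices hmax : ∀ x, 0 ≤ K * b x - v x by
    have := mul_le_mul_of_nonneg_left (hle x) hK
    linarith [hmax x]
  refine ((hb.const_mul K).sub hv).nonneg_of_fracLap_neg hs
    (by simpa using (hb0.const_mul K).sub hv0) fun z hz ↦ ?_
  have hbz : 0 < b z := (barrier_pos s z).trans_le (hge z)
  have hRz : R < |z| := by
    by_contra! h
    have hRz : barrier s R ≤ barrier s z := Real.rpow_le_rpow_of_nonpos (one_add_sq_pos z)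
      (by nlinarith [pow_le_pow_left₀ (abs_nonneg z) h 2, sq_abs z]) (by linarith [hs.1])
    linarith [hin z h, le_abs_self M, mul_le_mul_of_nonneg_left (hRz.trans (hge z)) hK]
  obtain ⟨a, ha, hav⟩ := hout z hRz
  have hvz : K * b z < v z := by linarith
  calc fracLap s (fun x ↦ K * b x - v x) z
      = K * fracLap s b z - fracLap s v z := by
        rw [(hb.const_mul K).fracLap_sub hs hv, hb.fracLap_const_mul hs]
    _ ≤ K * (a₀ / 2 * b z) - (a * v z - G * barrier s z) := by gcongr; exact hsuper z
    _ ≤ K * (a₀ / 2 * b z) - (a₀ * v z - K * (a₀ / 2) * b z) := by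
        have hG : G * barrier s z ≤ K * (a₀ / 2) * b z :=
          mul_le_mul ((le_abs_self G).trans hKG) (hge z) (barrier_pos s z).le (by positivity)
        have : a₀ * v z ≤ a * v z := by gcongr; exact (mul_nonneg hK hbz.le).trans hvz.le
        linarith
    _ = a₀ * (K * b z - v z) := by ring
    _ < 0 := mul_neg_of_pos_of_neg ha₀ hz

theorem exists_forall_abs_le_mul_barrier (hs : s ∈ Ioo (0 : ℝ) 1) {a₀ : ℝ} (ha₀ : 0 < a₀)
    (R M G : ℝ) : ∃ K, ∀ v : ℝ → ℝ, BoundedC2 v → Tendsto v (cocompact ℝ) (𝓝 0) →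
      (∀ x, |x| ≤ R → |v x| ≤ M) →
      (∀ x, R < |x| → ∃ a, a₀ ≤ a ∧ |fracLap s v x - a * v x| ≤ G * barrier s x) →
      ∀ x, |v x| ≤ K * barrier s x := by
  obtain ⟨K, hK⟩ := exists_forall_le_mul_barrier hs ha₀ R M G
  refine ⟨K, fun v hv hv0 hin hout x ↦ abs_le'.2 ⟨?_, ?_⟩⟩
  · refine hK v hv hv0 (fun x hx ↦ (abs_le.1 (hin x hx)).2) (fun x hx ↦ ?_) x
    obtain ⟨a, ha, h⟩ := hout x hx
    exact ⟨a, ha, by linarith [(abs_le.1 h).1]⟩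
  · refine hK (fun x ↦ -v x) hv.neg (by simpa using hv0.neg)
      (fun x hx ↦ neg_le.1 (abs_le.1 (hin x hx)).1) (fun x hx ↦ ?_) x
    obtain ⟨a, ha, h⟩ := hout x hx
    refine ⟨a, ha, ?_⟩
    rw [hv.fracLap_neg hs]
    linarith [(abs_le.1 h).2]

theorem isBigO_barrier_of_fracLap (hs : s ∈ Ioo (0 : ℝ) 1) {a₀ : ℝ} (ha₀ : 0 < a₀)
    {v A : ℝ → ℝ} (hv : BoundedC2 v) (hv0 : Tendsto v (cocompact ℝ) (𝓝 0))
    (hA : ∀ᶠ x in cocompact ℝ, a₀ ≤ A x)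
    (heq : (fun x ↦ fracLap s v x - A x * v x) =O[cocompact ℝ] barrier s) :
    v =O[⊤] barrier s := by
  obtain ⟨M, hM⟩ := hv.bounded
  obtain ⟨G, hG⟩ := heq.bound
  obtain ⟨R, hR⟩ := eventually_cocompact_iff.1 (hA.and hG)
  obtain ⟨K, hK⟩ := exists_forall_abs_le_mul_barrier hs ha₀ R M G
  refine isBigO_top_barrier_iff.2 ⟨K, hK v hv hv0 (fun x _ ↦ hM x) fun x hx ↦ ?_⟩
  obtain ⟨hAx, hGx⟩ := hR x hx.le
  rw [Real.norm_eq_abs, Real.norm_of_nonneg (barrier_pos s x).le] at hGx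
  exact ⟨A x, hAx, hGx⟩

/-! ### Decay of derivatives by difference quotients -/

theorem exists_abs_increment_le (hs : 0 < s) {f : ℝ → ℝ} (hf : Differentiable ℝ f)
    (hf' : deriv f =O[⊤] barrier s) :
    ∃ G, ∀ h ∈ Ioc (0 : ℝ) 1, ∀ x, |f (x + h) - f x| ≤ h * (G * barrier s x) := by
  obtain ⟨C, hC⟩ := isBigO_top_barrier_iff.1 hf'
  have hC0 : 0 ≤ C :=
    nonneg_of_mul_nonneg_left ((abs_nonneg _).trans (hC 0)) (barrier_pos s 0)
  refine ⟨C * 3 ^ (1 / 2 + s), fun h hh x ↦ ?_⟩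
  have hbound : ∀ t ∈ Icc x (x + h), ‖deriv f t‖ ≤ C * 3 ^ (1 / 2 + s) * barrier s x := by
    intro t ht
    refine (hC t).trans ?_
    rw [mul_assoc]
    gcongr
    exact barrier_le_of_abs_sub_le_one hs (abs_le.2 ⟨by linarith [ht.1], by linarith [ht.2, hh.2]⟩)
  have hxh : x ≤ x + h := by linarith [hh.1]
  have hmvt := (convex_Icc x (x + h)).norm_image_sub_le_of_norm_deriv_le (fun t _ ↦ hf t) hbound
    (left_mem_Icc.2 hxh) (right_mem_Icc.2 hxh)
  rwa [add_sub_cancel_left, Real.norm_of_nonneg hh.1.le, mul_comm, Real.norm_eq_abs] at hmvt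

theorem tendsto_increment_zero {l₁ l₂ : ℝ} (hbot : Tendsto u atBot (𝓝 l₁))
    (htop : Tendsto u atTop (𝓝 l₂)) (h : ℝ) :
    Tendsto (fun x ↦ u (x + h) - u x) (cocompact ℝ) (𝓝 0) := by
  rw [cocompact_eq_atBot_atTop, tendsto_sup]
  constructor
  · simpa using (hbot.comp (tendsto_atBot_add_const_right _ h tendsto_id)).sub hbot
  · simpa using (htop.comp (tendsto_atTop_add_const_right _ h tendsto_id)).sub htop

theorem deriv_isBigO_barrier_of_increment (hs : s ∈ Ioo (0 : ℝ) 1) {a₀ : ℝ} (ha₀ : 0 < a₀)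
    (hu : BoundedC2 u) {l₁ l₂ : ℝ} (hbot : Tendsto u atBot (𝓝 l₁))
    (htop : Tendsto u atTop (𝓝 l₂)) {R G : ℝ}
    (heq : ∀ h ∈ Ioc (0 : ℝ) 1, ∀ x, R < |x| → ∃ a, a₀ ≤ a ∧
      |fracLap s u (x + h) - fracLap s u x - a * (u (x + h) - u x)| ≤ h * (G * barrier s x)) :
    deriv u =O[⊤] barrier s := by
  obtain ⟨M, hM⟩ := isCompact_Icc.exists_bound_of_continuousOn (s := Icc (-(R + 1)) (R + 1))
    (hu.contDiff.continuous_deriv one_le_two).continuousOn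
  obtain ⟨K, hK⟩ := exists_forall_abs_le_mul_barrier hs ha₀ R M G
  have hquot : ∀ h ∈ Ioc (0 : ℝ) 1, ∀ x, |h⁻¹ * (u (x + h) - u x)| ≤ K * barrier s x := by
    intro h hh
    have hinv : 0 < h⁻¹ := inv_pos.2 hh.1
    have hinc := (hu.comp_add_const h).sub hu
    refine hK (fun x ↦ h⁻¹ * (u (x + h) - u x)) (hinc.const_mul h⁻¹)
      (by simpa using (tendsto_increment_zero hbot htop h).const_mul h⁻¹)
      (fun x hx ↦ ?_) (fun x hx ↦ ?_)
    · have hxh : x ≤ x + h := by linarith [hh.1]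
      have hmvt := (convex_Icc x (x + h)).norm_image_sub_le_of_norm_deriv_le
        (fun t _ ↦ hu.differentiable t) (fun t ht ↦ hM t ⟨by linarith [ht.1, (abs_le.1 hx).1],
          by linarith [ht.2, hh.2, (abs_le.1 hx).2]⟩) (left_mem_Icc.2 hxh) (right_mem_Icc.2 hxh)
      rw [add_sub_cancel_left, Real.norm_of_nonneg hh.1.le, Real.norm_eq_abs] at hmvt
      rw [abs_mul, abs_of_pos hinv, inv_mul_le_iff₀ hh.1]
      linarith
    · obtain ⟨a, ha, hle⟩ := heq h hh x hx
      refine ⟨a, ha, ?_⟩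
      rw [hinc.fracLap_const_mul hs, (hu.comp_add_const h).fracLap_sub hs hu,
        fracLap_comp_add_const, mul_left_comm, ← mul_sub, abs_mul, abs_of_pos hinv,
        inv_mul_le_iff₀ hh.1]
      exact hle
  refine isBigO_top_barrier_iff.2 ⟨K, fun x ↦ ?_⟩
  refine le_of_tendsto (hu.differentiable x).hasDerivAt.tendsto_slope_zero_right.abs ?_
  filter_upwards [Ioc_mem_nhdsGT (zero_lt_one' ℝ)] with h hh
  exact hquot h hh x

theorem deriv_isBigO_barrier (hs : s ∈ Ioo (0 : ℝ) 1) {a₀ : ℝ} (ha₀ : 0 < a₀) (hu : BoundedC2 u)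
    (hu0 : Tendsto u (cocompact ℝ) (𝓝 0)) {A g : ℝ → ℝ}
    (heq : ∀ x, fracLap s u x = A x * u x + g x) (hA : Differentiable ℝ A)
    (hA' : deriv A =O[⊤] barrier s) (hg : Differentiable ℝ g) (hg' : deriv g =O[⊤] barrier s)
    (hpos : ∀ᶠ x in cocompact ℝ, a₀ ≤ A x) : deriv u =O[⊤] barrier s := by
  obtain ⟨M, hM⟩ := hu.bounded
  obtain ⟨C, hC⟩ := exists_abs_increment_le hs.1 hA hA'
  obtain ⟨D, hD⟩ := exists_abs_increment_le hs.1 hg hg'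
  obtain ⟨R, hR⟩ := eventually_cocompact_iff.1 hpos
  rw [cocompact_eq_atBot_atTop, tendsto_sup] at hu0
  refine deriv_isBigO_barrier_of_increment hs ha₀ hu hu0.1 hu0.2 (R := R + 1) (G := C * M + D)
    fun h hh x hx ↦ ⟨A (x + h), hR _ ?_, ?_⟩
  · have := abs_sub (x + h) h
    rw [add_sub_cancel_right, abs_of_pos hh.1] at this
    linarith [hh.2]
  · calc |fracLap s u (x + h) - fracLap s u x - A (x + h) * (u (x + h) - u x)|
        = |(A (x + h) - A x) * u x + (g (x + h) - g x)| := by rw [heq, heq]; ring_nf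
      _ ≤ |A (x + h) - A x| * |u x| + |g (x + h) - g x| := by
          rw [← abs_mul]; exact abs_add_le _ _
      _ ≤ h * (C * barrier s x) * M + h * (D * barrier s x) :=
          add_le_add (mul_le_mul (hC h hh x) (hM x) (abs_nonneg _)
            ((abs_nonneg _).trans (hC h hh x))) (hD h hh x)
      _ = h * ((C * M + D) * barrier s x) := by ring

theorem fracLap_deriv_eq (hs : s ∈ Ioo (0 : ℝ) 1) (hu : BoundedC2 u) (hu' : BoundedC2 (deriv u))
    {A g : ℝ → ℝ} (heq : ∀ x, fracLap s u x = A x * u x + g x) (hA : Differentiable ℝ A)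
    (hg : Differentiable ℝ g) (x : ℝ) :
    fracLap s (deriv u) x = A x * deriv u x + (deriv A x * u x + deriv g x) := by
  have h := hu.hasDerivAt_fracLap hs hu' x
  rw [funext heq] at h
  have := h.unique (((hA x).hasDerivAt.mul (hu.differentiable x).hasDerivAt).add
    (hg x).hasDerivAt)
  linarith

theorem isBigO_barrier_mul {v w : ℝ → ℝ} (hv : v =O[⊤] fun _ ↦ (1 : ℝ))
    (hw : w =O[⊤] barrier s) : (fun x ↦ v x * w x) =O[⊤] barrier s := by
  simpa using hv.mul hw

theorem deriv_deriv_isBigO_barrier (hs : s ∈ Ioo (0 : ℝ) 1) {a₀ : ℝ} (ha₀ : 0 < a₀)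
    (hu : ContDiff ℝ 3 u) (hu0 : Tendsto u (cocompact ℝ) (𝓝 0)) {A g : ℝ → ℝ}
    (heq : ∀ x, fracLap s u x = A x * u x + g x)
    (hA : ContDiff ℝ 2 A) (hA' : deriv A =O[⊤] barrier s) (hA'' : deriv (deriv A) =O[⊤] barrier s)
    (hg : ContDiff ℝ 2 g) (hg' : deriv g =O[⊤] barrier s) (hg'' : deriv (deriv g) =O[⊤] barrier s)
    (hpos : ∀ᶠ x in cocompact ℝ, a₀ ≤ A x) : deriv (deriv u) =O[⊤] barrier s := by
  have hlim := hu0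
  rw [cocompact_eq_atBot_atTop, tendsto_sup] at hlim
  have huC := boundedC2_of_tendsto (hu.of_le (by norm_num)) hlim.1 hlim.2
  have hA1 := hA.differentiable two_ne_zero
  have hg1 := hg.differentiable two_ne_zero
  have hu' := deriv_isBigO_barrier hs ha₀ huC hu0 heq hA1 hA' hg1 hg' hpos
  have hu'C := boundedC2_of_isBigO_one hu.deriv' (hu'.trans (barrier_isBigO_one hs.1))
  have hsource : ∀ x, HasDerivAt (fun x ↦ deriv A x * u x + deriv g x)
      (u x * deriv (deriv A) x + deriv u x * deriv A x + deriv (deriv g) x) x := fun x ↦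
    (((hA.differentiable_deriv_two x).hasDerivAt.mul (huC.differentiable x).hasDerivAt).add
      (hg.differentiable_deriv_two x).hasDerivAt).congr_deriv (by ring)
  refine deriv_isBigO_barrier hs ha₀ hu'C (tendsto_zero_of_isBigO_barrier hs.1 hu')
    (fracLap_deriv_eq hs huC hu'C heq hA1 hg1) hA1 hA'
    (fun x ↦ (hsource x).differentiableAt) ?_ hpos
  rw [funext fun x ↦ (hsource x).deriv]
  exact ((isBigO_barrier_mul huC.isBigO_one hA'').add
    (isBigO_barrier_mul hu'C.isBigO_one hA')).add hg''

/-! ### Transition layers and their correctors -/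

/-- A reaction term of period one which vanishes to exactly first order at the integers, such as
the derivative of a multiwell potential. -/
structure PeriodicReaction (f : ℝ → ℝ) : Prop where
  contDiff : ContDiff ℝ 3 f
  periodic : Function.Periodic f 1
  map_zero : f 0 = 0
  deriv_zero_pos : 0 < deriv f 0

/-- A solution of `-(-Δ)^s φ = f(φ)` joining the consecutive equilibria `0` and `1`. -/
structure TransitionLayer (s : ℝ) (f φ : ℝ → ℝ) : Prop where
  contDiff : ContDiff ℝ 4 φ
  fracLap_eq : ∀ x, fracLap s φ x = f (φ x)
  tendsto_atBot : Tendsto φ atBot (𝓝 0)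
  tendsto_atTop : Tendsto φ atTop (𝓝 1)

/-- The right-hand side `b (f'(φ) - f'(0)) + c φ'` of the corrector equation. -/
def layerForcing (f φ : ℝ → ℝ) (b c x : ℝ) : ℝ :=
  b * (deriv f (φ x) - deriv f 0) + c * deriv φ x

/-- A decaying solution of `-(-Δ)^s ψ = f'(φ) ψ + b (f'(φ) - f'(0)) + c φ'`. -/
structure LayerCorrector (s : ℝ) (f φ : ℝ → ℝ) (b c : ℝ) (ψ : ℝ → ℝ) : Prop where
  contDiff : ContDiff ℝ 3 ψ
  fracLap_eq : ∀ x, fracLap s ψ x =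
    deriv f (φ x) * ψ x + layerForcing f φ b c x
  tendsto_zero : Tendsto ψ (cocompact ℝ) (𝓝 0)

theorem exists_eq_mul_sub_of_le_deriv {S : Set ℝ} (hS : Convex ℝ S) {f : ℝ → ℝ}
    (hf : Differentiable ℝ f) {a₀ : ℝ} (hle : ∀ z ∈ S, a₀ ≤ deriv f z) {v w : ℝ} (hv : v ∈ S)
    (hw : w ∈ S) : ∃ a, a₀ ≤ a ∧ f w - f v = a * (w - v) := by
  rcases eq_or_ne v w with rfl | -
  · exact ⟨a₀, le_rfl, by simp⟩
  · obtain ⟨z, hz, h⟩ := domain_mvt (fun t _ ↦ (hf t).hasFDerivAt.hasFDerivWithinAt) hS hv hw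
    refine ⟨deriv f z, hle z (hS.segment_subset hv hw hz), ?_⟩
    rw [h, fderiv_eq_smul_deriv, smul_eq_mul, mul_comm]

theorem deriv_isBigO_barrier_of_tendsto (hs : s ∈ Ioo (0 : ℝ) 1) {f : ℝ → ℝ} (hf : ContDiff ℝ 1 f)
    {l₁ l₂ : ℝ} (h₁ : 0 < deriv f l₁) (h₂ : 0 < deriv f l₂) (hu : ContDiff ℝ 2 u)
    (heq : ∀ x, fracLap s u x = f (u x)) (hbot : Tendsto u atBot (𝓝 l₁))
    (htop : Tendsto u atTop (𝓝 l₂)) : deriv u =O[⊤] barrier s := by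
  obtain ⟨a₀, ha₀, hlt⟩ := exists_between (lt_min h₁ h₂)
  have hball : ∀ l, a₀ < deriv f l → ∃ ε > 0, ∀ z ∈ ball l ε, a₀ ≤ deriv f z := fun l hl ↦
    Metric.eventually_nhds_iff_ball.1
      ((hf.continuous_deriv le_rfl).continuousAt.eventually_const_le hl)
  obtain ⟨ε₁, hε₁, hf₁⟩ := hball l₁ (hlt.trans_le (min_le_left _ _))
  obtain ⟨ε₂, hε₂, hf₂⟩ := hball l₂ (hlt.trans_le (min_le_right _ _))
  obtain ⟨R₁, hR₁⟩ := eventually_atBot.1 (hbot.eventually (ball_mem_nhds l₁ hε₁))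
  obtain ⟨R₂, hR₂⟩ := eventually_atTop.1 (htop.eventually (ball_mem_nhds l₂ hε₂))
  refine deriv_isBigO_barrier_of_increment hs ha₀ (boundedC2_of_tendsto hu hbot htop) hbot htop
    (R := max (1 - R₁) R₂) (G := 0) fun h hh x hx ↦ ?_
  have hmean : ∃ a, a₀ ≤ a ∧ f (u (x + h)) - f (u x) = a * (u (x + h) - u x) := by
    have hdiff := hf.differentiable one_ne_zero
    rcases lt_abs.1 hx with hx | hx <;> have hx' := max_lt_iff.1 hx
    · exact exists_eq_mul_sub_of_le_deriv (convex_ball l₂ ε₂) hdiff hf₂ (hR₂ x hx'.2.le)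
        (hR₂ _ (by linarith [hh.1]))
    · exact exists_eq_mul_sub_of_le_deriv (convex_ball l₁ ε₁) hdiff hf₁ (hR₁ x (by linarith))
        (hR₁ _ (by linarith [hh.2]))
  obtain ⟨a, ha, h⟩ := hmean
  exact ⟨a, ha, by simp [heq, h]⟩

theorem isBigO_one_comp {g v : ℝ → ℝ} (hg : Continuous g) (hv : v =O[⊤] fun _ ↦ (1 : ℝ)) :
    (fun x ↦ g (v x)) =O[⊤] fun _ ↦ (1 : ℝ) := by
  obtain ⟨M, hM⟩ := isBigO_top.1 hv
  obtain ⟨B, hB⟩ := isCompact_Icc.exists_bound_of_continuousOn (s := Icc (-M) M) hg.continuousOn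
  exact isBigO_top.2 ⟨B, fun x ↦ by simpa using hB _ (abs_le.1 (by simpa using hM x))⟩

theorem deriv_periodic {f : ℝ → ℝ} {p : ℝ} (hf : Function.Periodic f p) :
    Function.Periodic (deriv f) p := fun x ↦ by
  rw [← deriv_comp_add_const, funext hf]

theorem PeriodicReaction.contDiff_deriv {f : ℝ → ℝ} (hf : PeriodicReaction f) :
    ContDiff ℝ 2 (deriv f) :=
  hf.contDiff.deriv' (n := 2)

namespace TransitionLayer

variable {f φ : ℝ → ℝ}

theorem contDiff_deriv (hφ : TransitionLayer s f φ) : ContDiff ℝ 3 (deriv φ) :=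
  hφ.contDiff.deriv' (n := 3)

theorem boundedC2 (hφ : TransitionLayer s f φ) : BoundedC2 φ :=
  boundedC2_of_tendsto (hφ.contDiff.of_le (by norm_num)) hφ.tendsto_atBot hφ.tendsto_atTop

theorem tendsto_comp (hφ : TransitionLayer s f φ) {g : ℝ → ℝ} (hg : Continuous g)
    (hper : Function.Periodic g 1) :
    Tendsto (fun x ↦ g (φ x)) (cocompact ℝ) (𝓝 (g 0)) := by
  rw [cocompact_eq_atBot_atTop, tendsto_sup]
  refine ⟨(hg.tendsto 0).comp hφ.tendsto_atBot, ?_⟩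
  rw [← hper 0, zero_add]
  exact (hg.tendsto 1).comp hφ.tendsto_atTop

theorem eventually_le_deriv (hφ : TransitionLayer s f φ) (hf : PeriodicReaction f) :
    ∀ᶠ x in cocompact ℝ, deriv f 0 / 2 ≤ deriv f (φ x) :=
  (hφ.tendsto_comp (hf.contDiff.continuous_deriv (by norm_num))
    (deriv_periodic hf.periodic)).eventually_const_le (half_lt_self hf.deriv_zero_pos)

theorem deriv_isBigO (hs : s ∈ Ioo (0 : ℝ) 1) (hf : PeriodicReaction f)
    (hφ : TransitionLayer s f φ) : deriv φ =O[⊤] barrier s := by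
  have h1 : 0 < deriv f 1 := by
    simpa [← deriv_periodic hf.periodic 0] using hf.deriv_zero_pos
  exact deriv_isBigO_barrier_of_tendsto hs (hf.contDiff.of_le (by norm_num)) hf.deriv_zero_pos h1
    hφ.boundedC2.contDiff hφ.fracLap_eq hφ.tendsto_atBot hφ.tendsto_atTop

theorem hasDerivAt_comp (hφ : TransitionLayer s f φ) {g : ℝ → ℝ} (hg : Differentiable ℝ g)
    (x : ℝ) : HasDerivAt (fun x ↦ g (φ x)) (deriv g (φ x) * deriv φ x) x :=
  (hg (φ x)).hasDerivAt.comp x (hφ.boundedC2.differentiable x).hasDerivAt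

theorem deriv_comp_isBigO (hs : s ∈ Ioo (0 : ℝ) 1) (hf : PeriodicReaction f)
    (hφ : TransitionLayer s f φ) {g : ℝ → ℝ} (hg : ContDiff ℝ 1 g) :
    deriv (fun x ↦ g (φ x)) =O[⊤] barrier s := by
  rw [funext fun x ↦ (hφ.hasDerivAt_comp (hg.differentiable one_ne_zero) x).deriv]
  exact isBigO_barrier_mul
    (isBigO_one_comp (hg.continuous_deriv le_rfl) hφ.boundedC2.isBigO_one) (hφ.deriv_isBigO hs hf)

theorem boundedC2_deriv (hs : s ∈ Ioo (0 : ℝ) 1) (hf : PeriodicReaction f)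
    (hφ : TransitionLayer s f φ) : BoundedC2 (deriv φ) :=
  boundedC2_of_isBigO_one (hφ.contDiff_deriv.of_le (by norm_num))
    ((hφ.deriv_isBigO hs hf).trans (barrier_isBigO_one hs.1))

theorem fracLap_deriv_eq (hs : s ∈ Ioo (0 : ℝ) 1) (hf : PeriodicReaction f)
    (hφ : TransitionLayer s f φ) (x : ℝ) :
    fracLap s (deriv φ) x = deriv f (φ x) * deriv φ x := by
  have h := hφ.boundedC2.hasDerivAt_fracLap hs (hφ.boundedC2_deriv hs hf) x
  rw [funext hφ.fracLap_eq] at h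
  exact h.unique (hφ.hasDerivAt_comp (hf.contDiff.differentiable (by norm_num)) x)

theorem deriv_deriv_isBigO (hs : s ∈ Ioo (0 : ℝ) 1) (hf : PeriodicReaction f)
    (hφ : TransitionLayer s f φ) : deriv (deriv φ) =O[⊤] barrier s :=
  deriv_isBigO_barrier hs (half_pos hf.deriv_zero_pos) (hφ.boundedC2_deriv hs hf)
    (tendsto_zero_of_isBigO_barrier hs.1 (hφ.deriv_isBigO hs hf)) (g := 0)
    (by simp [hφ.fracLap_deriv_eq hs hf])
    (hf.contDiff_deriv.differentiable two_ne_zero |>.comp hφ.boundedC2.differentiable)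
    (hφ.deriv_comp_isBigO hs hf (hf.contDiff_deriv.of_le one_le_two)) (differentiable_const 0)
    (isBigO_of_le _ (by simp)) (hφ.eventually_le_deriv hf)

theorem deriv_deriv_comp_isBigO (hs : s ∈ Ioo (0 : ℝ) 1) (hf : PeriodicReaction f)
    (hφ : TransitionLayer s f φ) {g : ℝ → ℝ} (hg : ContDiff ℝ 2 g) :
    deriv (deriv fun x ↦ g (φ x)) =O[⊤] barrier s := by
  have hg' : ContDiff ℝ 1 (deriv g) := hg.deriv'
  have hderiv : deriv (fun x ↦ g (φ x)) = fun x ↦ deriv g (φ x) * deriv φ x :=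
    funext fun x ↦ (hφ.hasDerivAt_comp (hg.differentiable two_ne_zero) x).deriv
  have hcomp := hφ.hasDerivAt_comp (hg'.differentiable one_ne_zero)
  rw [hderiv, funext fun x ↦ ((hcomp x).differentiableAt.hasDerivAt.fun_mul
    ((hφ.boundedC2_deriv hs hf).differentiable x).hasDerivAt).deriv]
  refine IsBigO.add ?_ (isBigO_barrier_mul (isBigO_one_comp hg'.continuous hφ.boundedC2.isBigO_one)
    (hφ.deriv_deriv_isBigO hs hf))
  simpa only [mul_comm] using isBigO_barrier_mul (hφ.boundedC2_deriv hs hf).isBigO_one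
    (hφ.deriv_comp_isBigO hs hf hg')

theorem deriv_deriv_deriv_isBigO (hs : s ∈ Ioo (0 : ℝ) 1) (hf : PeriodicReaction f)
    (hφ : TransitionLayer s f φ) : deriv (deriv (deriv φ)) =O[⊤] barrier s :=
  deriv_deriv_isBigO_barrier hs (half_pos hf.deriv_zero_pos) hφ.contDiff_deriv
    (tendsto_zero_of_isBigO_barrier hs.1 (hφ.deriv_isBigO hs hf)) (g := 0)
    (by simp [hφ.fracLap_deriv_eq hs hf]) (hf.contDiff_deriv.comp hφ.boundedC2.contDiff)
    (hφ.deriv_comp_isBigO hs hf (hf.contDiff_deriv.of_le one_le_two))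
    (hφ.deriv_deriv_comp_isBigO hs hf hf.contDiff_deriv) contDiff_const
    (isBigO_of_le _ (by simp)) (isBigO_of_le _ (by simp)) (hφ.eventually_le_deriv hf)

theorem deriv_layerForcing (hs : s ∈ Ioo (0 : ℝ) 1) (hf : PeriodicReaction f)
    (hφ : TransitionLayer s f φ) (b c : ℝ) : deriv (layerForcing f φ b c) =
      fun x ↦ b * deriv (fun x ↦ deriv f (φ x)) x + c * deriv (deriv φ) x :=
  funext fun x ↦ ((((hφ.hasDerivAt_comp (hf.contDiff_deriv.differentiable two_ne_zero)
      x).differentiableAt.hasDerivAt.sub_const _).const_mul b).add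
    (((hφ.boundedC2_deriv hs hf).differentiable x).hasDerivAt.const_mul c)).deriv

theorem contDiff_layerForcing (hf : PeriodicReaction f) (hφ : TransitionLayer s f φ) (b c : ℝ) :
    ContDiff ℝ 2 (layerForcing f φ b c) :=
  (((hf.contDiff_deriv.comp hφ.boundedC2.contDiff).sub contDiff_const).const_smul b).add
    ((hφ.contDiff_deriv.of_le (by norm_num)).const_smul c)

theorem deriv_layerForcing_isBigO (hs : s ∈ Ioo (0 : ℝ) 1) (hf : PeriodicReaction f)
    (hφ : TransitionLayer s f φ) (b c : ℝ) : deriv (layerForcing f φ b c) =O[⊤] barrier s := by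
  rw [hφ.deriv_layerForcing hs hf]
  exact ((hφ.deriv_comp_isBigO hs hf (hf.contDiff_deriv.of_le one_le_two)).const_mul_left b).add
    ((hφ.deriv_deriv_isBigO hs hf).const_mul_left c)

theorem deriv_deriv_layerForcing_isBigO (hs : s ∈ Ioo (0 : ℝ) 1) (hf : PeriodicReaction f)
    (hφ : TransitionLayer s f φ) (b c : ℝ) :
    deriv (deriv (layerForcing f φ b c)) =O[⊤] barrier s := by
  have hA : Differentiable ℝ (deriv fun x ↦ deriv f (φ x)) :=
    (hf.contDiff_deriv.comp hφ.boundedC2.contDiff).differentiable_deriv_two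
  have hφ'' := (hφ.contDiff_deriv.of_le (by norm_num)).differentiable_deriv_two
  rw [hφ.deriv_layerForcing hs hf, funext fun x ↦ (((hA x).hasDerivAt.const_mul b).fun_add
    ((hφ'' x).hasDerivAt.const_mul c)).deriv]
  exact ((hφ.deriv_deriv_comp_isBigO hs hf hf.contDiff_deriv).const_mul_left b).add
    ((hφ.deriv_deriv_deriv_isBigO hs hf).const_mul_left c)

end TransitionLayer

namespace LayerCorrector

variable {f φ ψ : ℝ → ℝ} {b c : ℝ}

theorem boundedC2 (hψ : LayerCorrector s f φ b c ψ) : BoundedC2 ψ := by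
  have h := hψ.tendsto_zero
  rw [cocompact_eq_atBot_atTop, tendsto_sup] at h
  exact boundedC2_of_tendsto (hψ.contDiff.of_le (by norm_num)) h.1 h.2

theorem deriv_isBigO (hs : s ∈ Ioo (0 : ℝ) 1) (hf : PeriodicReaction f)
    (hφ : TransitionLayer s f φ) (hψ : LayerCorrector s f φ b c ψ) :
    deriv ψ =O[⊤] barrier s :=
  deriv_isBigO_barrier hs (half_pos hf.deriv_zero_pos) hψ.boundedC2 hψ.tendsto_zero
    hψ.fracLap_eq (hf.contDiff_deriv.differentiable two_ne_zero |>.comp hφ.boundedC2.differentiable)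
    (hφ.deriv_comp_isBigO hs hf (hf.contDiff_deriv.of_le one_le_two))
    ((hφ.contDiff_layerForcing hf b c).differentiable two_ne_zero)
    (hφ.deriv_layerForcing_isBigO hs hf b c) (hφ.eventually_le_deriv hf)

theorem deriv_deriv_isBigO (hs : s ∈ Ioo (0 : ℝ) 1) (hf : PeriodicReaction f)
    (hφ : TransitionLayer s f φ) (hψ : LayerCorrector s f φ b c ψ) :
    deriv (deriv ψ) =O[⊤] barrier s :=
  deriv_deriv_isBigO_barrier hs (half_pos hf.deriv_zero_pos) hψ.contDiff hψ.tendsto_zero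
    hψ.fracLap_eq (hf.contDiff_deriv.comp hφ.boundedC2.contDiff)
    (hφ.deriv_comp_isBigO hs hf (hf.contDiff_deriv.of_le one_le_two))
    (hφ.deriv_deriv_comp_isBigO hs hf hf.contDiff_deriv) (hφ.contDiff_layerForcing hf b c)
    (hφ.deriv_layerForcing_isBigO hs hf b c) (hφ.deriv_deriv_layerForcing_isBigO hs hf b c)
    (hφ.eventually_le_deriv hf)

end LayerCorrector

/-! ### The odd profile -/

/-- The smooth odd function `x (1 + x ^ 2) ^ (-1/2 - s)`, the model of the tail
`x / |x| ^ (1 + 2 s)`. -/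
def oddProfile (s x : ℝ) : ℝ := x * barrier s x

theorem oddProfile_neg_arg (s x : ℝ) : oddProfile s (-x) = -oddProfile s x := by
  rw [oddProfile, oddProfile, barrier_neg_arg, neg_mul]

theorem abs_mul_abs_oddProfile_le_one (hs : 1 / 2 ≤ s) (x : ℝ) : |x| * |oddProfile s x| ≤ 1 := by
  calc |x| * |oddProfile s x| = x ^ 2 * (1 + x ^ 2) ^ (-(1 / 2 + s)) := by
        rw [oddProfile, abs_mul, abs_of_pos (barrier_pos s x), ← mul_assoc, abs_mul_abs_self, sq,
          barrier, sq]
    _ ≤ (1 + x ^ 2) * (1 + x ^ 2) ^ (-(1 / 2 + s)) := by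
        have := Real.rpow_nonneg (one_add_sq_pos x).le (-(1 / 2 + s))
        gcongr
        exact le_add_of_nonneg_left zero_le_one
    _ = (1 + x ^ 2) ^ (1 + -(1 / 2 + s)) := by
        rw [Real.rpow_add (one_add_sq_pos x), Real.rpow_one]
    _ ≤ 1 := Real.rpow_le_one_of_one_le_of_nonpos (le_add_of_nonneg_right (sq_nonneg x))
        (by linarith)

theorem abs_oddProfile_le_inv (hs : 1 / 2 ≤ s) {x c : ℝ} (hc : 0 < c) (h : c ≤ |x|) :
    |oddProfile s x| ≤ c⁻¹ := by
  rw [← one_div, le_div_iff₀' hc]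
  exact (mul_le_mul_of_nonneg_right h (abs_nonneg _)).trans (abs_mul_abs_oddProfile_le_one hs x)

theorem oddProfile_boundedC2 (hs : 1 / 2 ≤ s) : BoundedC2 (oddProfile s) := by
  refine ⟨contDiff_id.mul (contDiff_one_add_sq_rpow _), 1, fun x ↦ ?_⟩
  rcases le_total |x| 1 with h | h
  · rw [oddProfile, abs_mul, abs_of_pos (barrier_pos s x)]
    exact mul_le_one₀ h (barrier_pos s x).le (barrier_le_one (by linarith) x)
  · simpa using abs_oddProfile_le_inv hs one_pos h

theorem oddProfile_tendsto_zero (hs : 1 / 2 ≤ s) :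
    Tendsto (oddProfile s) (cocompact ℝ) (𝓝 0) := by
  refine squeeze_zero_norm (fun x ↦ ?_)
    (tendsto_inv_atTop_zero.comp (tendsto_norm_cocompact_atTop (E := ℝ)))
  rcases eq_or_ne x 0 with rfl | h
  · simp [oddProfile]
  · exact abs_oddProfile_le_inv hs (abs_pos.2 h) le_rfl

theorem deriv_deriv_id_mul {f : ℝ → ℝ} (hf : ContDiff ℝ 2 f) (x : ℝ) :
    deriv (deriv fun x ↦ x * f x) x = 2 * deriv f x + x * deriv (deriv f) x := by
  have hf0 := hf.differentiable two_ne_zero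
  have h : (deriv fun x ↦ x * f x) = fun x ↦ 1 * f x + x * deriv f x :=
    funext fun x ↦ ((hasDerivAt_id' x).fun_mul (hf0 x).hasDerivAt).deriv
  rw [h, (((hf0 x).hasDerivAt.const_mul 1).fun_add
      ((hasDerivAt_id' x).fun_mul (hf.differentiable_deriv_two x).hasDerivAt)).deriv]
  ring

theorem abs_mul_abs_deriv_deriv_oddProfile_le (s : ℝ) :
    ∃ B, 0 ≤ B ∧ ∀ x, |x| * |deriv (deriv (oddProfile s)) x| ≤ B * barrier s x := by
  set k : ℝ := -(1 / 2 + s)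
  refine ⟨4 * |k| + (2 * |k| + 4 * |k * (k - 1)|), by positivity, fun x ↦ ?_⟩
  have hpow := Real.rpow_nonneg (one_add_sq_pos x).le (k - 1)
  have hderiv : |deriv (barrier s) x| = 2 * |k| * |x| * (1 + x ^ 2) ^ (k - 1) := by
    have : deriv (barrier s) x = 2 * k * x * (1 + x ^ 2) ^ (k - 1) :=
      congrFun (deriv_one_add_sq_rpow k) x
    rw [this, abs_mul, abs_mul, abs_mul, abs_two, abs_of_nonneg hpow]
  have hbarrier : barrier s x = (1 + x ^ 2) * (1 + x ^ 2) ^ (k - 1) := by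
    rw [Real.rpow_sub_one (one_add_sq_pos x).ne', mul_div_cancel₀ _ (one_add_sq_pos x).ne']
    rfl
  calc |x| * |deriv (deriv (oddProfile s)) x|
      ≤ |x| * (2 * |deriv (barrier s) x| + |x| * |deriv (deriv (barrier s)) x|) := by
        have h : deriv (deriv (oddProfile s)) x =
            2 * deriv (barrier s) x + x * deriv (deriv (barrier s)) x :=
          deriv_deriv_id_mul (contDiff_one_add_sq_rpow k) x
        rw [h]
        gcongr
        simpa only [abs_mul, abs_two] using
          abs_add_le (2 * deriv (barrier s) x) (x * deriv (deriv (barrier s)) x)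
    _ ≤ |x| * (2 * (2 * |k| * |x| * (1 + x ^ 2) ^ (k - 1)) +
          |x| * ((2 * |k| + 4 * |k * (k - 1)|) * (1 + x ^ 2) ^ (k - 1))) := by
        rw [hderiv]
        gcongr
        exact abs_deriv_deriv_one_add_sq_rpow_le k x
    _ = (4 * |k| + (2 * |k| + 4 * |k * (k - 1)|)) * (|x| ^ 2 * (1 + x ^ 2) ^ (k - 1)) := by ring
    _ ≤ (4 * |k| + (2 * |k| + 4 * |k * (k - 1)|)) * barrier s x := by
        rw [hbarrier, sq_abs]
        gcongr
        exact le_add_of_nonneg_left zero_le_one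

theorem rpow_le_mul_barrier_of_half_le (hs : 0 < s) {x y : ℝ} (hx : 2 ≤ x) (hy : x / 2 ≤ y) :
    y ^ (-(1 + 2 * s)) ≤ 5 ^ (1 / 2 + s) * barrier s x := by
  have hy0 : 0 < y := by linarith
  rw [← abs_of_pos hy0]
  exact abs_rpow_le_mul_barrier hs (by norm_num) hy0.ne' (by nlinarith)

theorem abs_rpow_sub_rpow_le (hs : 0 < s) {x y : ℝ} (hx : 2 ≤ x) (hy : x / 2 ≤ y) :
    |y ^ (-(1 + 2 * s)) - x ^ (-(1 + 2 * s))| ≤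
      2 * (1 + 2 * s) * (5 ^ (1 / 2 + s) * barrier s x) / x * |x - y| := by
  have hmvt := (convex_Ici (x / 2)).norm_image_sub_le_of_norm_hasDerivWithin_le
    (f := fun t : ℝ ↦ t ^ (-(1 + 2 * s))) (f' := fun t ↦ -(1 + 2 * s) * t ^ (-(1 + 2 * s) - 1))
    (C := 2 * (1 + 2 * s) * (5 ^ (1 / 2 + s) * barrier s x) / x) (x := x) (y := y)
    (fun t ht ↦ ?_) (fun t ht ↦ ?_) (by simp only [mem_Ici]; linarith) hy
  · rwa [Real.norm_eq_abs, Real.norm_eq_abs, abs_sub_comm y x] at hmvt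
  all_goals
    have ht0 : 0 < t := by linarith [mem_Ici.1 ht]
  · exact (Real.hasDerivAt_rpow_const (Or.inl ht0.ne')).hasDerivWithinAt
  · rw [Real.norm_eq_abs, abs_mul, abs_neg, abs_of_pos (by linarith : 0 < 1 + 2 * s),
      Real.rpow_sub_one ht0.ne', abs_of_pos (by positivity)]
    calc (1 + 2 * s) * (t ^ (-(1 + 2 * s)) / t)
        ≤ (1 + 2 * s) * ((5 ^ (1 / 2 + s) * barrier s x) / (x / 2)) := by
          have := barrier_pos s x
          gcongr
          · exact rpow_le_mul_barrier_of_half_le hs hx ht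
          · exact ht
      _ = 2 * (1 + 2 * s) * (5 ^ (1 / 2 + s) * barrier s x) / x := by field_simp

theorem setIntegral_oddProfile_sub {x : ℝ} (hx : 0 ≤ x) :
    ∫ y in Ioc (x / 2) (3 * x / 2), oddProfile s (x - y) = 0 := by
  rw [← intervalIntegral.integral_of_le (by linarith),
    intervalIntegral.integral_comp_sub_left (oddProfile s), show x - 3 * x / 2 = -(x / 2) by ring,
    sub_half]
  have h := intervalIntegral.integral_comp_neg (a := -(x / 2)) (b := x / 2) (oddProfile s)
  simp only [oddProfile_neg_arg, neg_neg, intervalIntegral.integral_neg] at h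
  linarith

theorem setIntegral_Ioc_rpow_one_sub_le (hs : s ∈ Ico (1 / 2 : ℝ) 1) {a : ℝ} (ha : 1 ≤ a) :
    ∫ y in Ioc 0 a, y ^ (1 - 2 * s) ≤ a / (2 - 2 * s) := by
  rw [← intervalIntegral.integral_of_le (by positivity), integral_rpow
    (Or.inl (by linarith [hs.2])), Real.zero_rpow (by linarith [hs.2]), sub_zero,
    show 1 - 2 * s + 1 = 2 - 2 * s by ring]
  have : (0 : ℝ) < 2 - 2 * s := by linarith [hs.2]
  gcongr
  exact Real.rpow_le_self_of_one_le ha (by linarith [hs.1])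

theorem norm_setIntegral_symmIntegrand_oddProfile_near (hs : s ∈ Ico (1 / 2 : ℝ) 1) :
    ∃ C, ∀ x, 2 ≤ x →
      ‖∫ y in Ioc 0 (x / 2), symmIntegrand s (oddProfile s) x y‖ ≤ C * barrier s x := by
  have hs0 : 0 < s := by linarith [hs.1]
  obtain ⟨B, hB0, hB⟩ := abs_mul_abs_deriv_deriv_oddProfile_le s
  set q : ℝ := 5 ^ (1 / 2 + s)
  refine ⟨2 * B * q / (2 - 2 * s), fun x hx ↦ ?_⟩
  have : 0 < x := by linarith
  have hbx := barrier_pos s x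
  have hdiff : ∀ y ∈ Ioc 0 (x / 2),
      |secondDiff (oddProfile s) x y| ≤ 2 * (B * (q * barrier s x) / (x / 2)) * y ^ 2 := by
    intro y hy
    refine abs_secondDiff_le_of_deriv_deriv (oddProfile_boundedC2 hs.1).contDiff hy.1.le
      fun t ht ↦ ?_
    have ht2 : x / 2 ≤ t := by linarith [ht.1, hy.2]
    have hcmp : barrier s t ≤ q * barrier s x :=
      barrier_le_mul_barrier hs0 (by norm_num) (by nlinarith)
    have h := (hB t).trans (mul_le_mul_of_nonneg_left hcmp hB0)
    rw [le_div_iff₀' (by positivity)]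
    refine le_trans ?_ h
    gcongr
    exact ht2.trans (le_abs_self t)
  have hint : IntegrableOn (fun y : ℝ ↦ y ^ (1 - 2 * s)) (Ioc 0 (x / 2)) :=
    (intervalIntegrable_iff_integrableOn_Ioc_of_le (by positivity)).1
      (intervalIntegral.intervalIntegrable_rpow' (by linarith [hs.2]))
  calc ‖∫ y in Ioc 0 (x / 2), symmIntegrand s (oddProfile s) x y‖
      ≤ ∫ y in Ioc 0 (x / 2), 2 * (B * (q * barrier s x) / (x / 2)) * y ^ (1 - 2 * s) := by
        refine norm_integral_le_of_norm_le (hint.const_mul _)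
          ((ae_restrict_mem measurableSet_Ioc).mono fun y hy ↦ ?_)
        rw [Real.norm_eq_abs, abs_symmIntegrand s _ _ hy.1,
          show 1 - 2 * s = 2 + -(1 + 2 * s) by ring, Real.rpow_add hy.1, Real.rpow_two, ← mul_assoc]
        have := Real.rpow_nonneg hy.1.le (-(1 + 2 * s))
        gcongr
        exact hdiff y hy
    _ ≤ 2 * (B * (q * barrier s x) / (x / 2)) * ((x / 2) / (2 - 2 * s)) := by
        rw [integral_const_mul]
        gcongr
        exact setIntegral_Ioc_rpow_one_sub_le hs (by linarith)
    _ = 2 * B * q / (2 - 2 * s) * barrier s x := by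
        field_simp

theorem abs_symmIntegrand_oddProfile_sub_le (hs : 1 / 2 ≤ s) {x y : ℝ} (hx : 2 ≤ x)
    (hy : x / 2 ≤ y) :
    |symmIntegrand s (oddProfile s) x y - x ^ (-(1 + 2 * s)) * oddProfile s (x - y)| ≤
      (3 + 2 * (1 + 2 * s)) * (5 ^ (1 / 2 + s) * barrier s x) / x := by
  have hx0 : 0 < x := by linarith
  have hs0 : 0 < s := by linarith
  set q := 5 ^ (1 / 2 + s) * barrier s x
  have hq : 0 ≤ q := mul_nonneg (by positivity) (barrier_pos s x).le
  have hkernel : 0 ≤ y ^ (-(1 + 2 * s)) := Real.rpow_nonneg (by linarith) _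
  have hfar : |oddProfile s (x + y) - 2 * oddProfile s x| ≤ 3 * x⁻¹ := by
    have hpx := abs_le.1 (abs_oddProfile_le_inv hs hx0 (le_abs_self x))
    have hpxy := abs_le.1 (abs_oddProfile_le_inv hs hx0
      ((by linarith : x ≤ x + y).trans (le_abs_self (x + y))))
    exact abs_le.2 ⟨by linarith, by linarith⟩
  calc |symmIntegrand s (oddProfile s) x y - x ^ (-(1 + 2 * s)) * oddProfile s (x - y)|
      = |(oddProfile s (x + y) - 2 * oddProfile s x) * y ^ (-(1 + 2 * s)) +
          (y ^ (-(1 + 2 * s)) - x ^ (-(1 + 2 * s))) * oddProfile s (x - y)| := by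
        unfold symmIntegrand secondDiff
        ring_nf
    _ ≤ |oddProfile s (x + y) - 2 * oddProfile s x| * y ^ (-(1 + 2 * s)) +
          |y ^ (-(1 + 2 * s)) - x ^ (-(1 + 2 * s))| * |oddProfile s (x - y)| := by
        refine (abs_add_le _ _).trans_eq ?_
        rw [abs_mul, abs_mul, abs_of_nonneg hkernel]
    _ ≤ 3 * x⁻¹ * q + 2 * (1 + 2 * s) * q / x * |x - y| * |oddProfile s (x - y)| := by
        gcongr
        · exact rpow_le_mul_barrier_of_half_le hs0 hx hy
        · exact abs_rpow_sub_rpow_le hs0 hx hy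
    _ ≤ 3 * x⁻¹ * q + 2 * (1 + 2 * s) * q / x * 1 := by
        rw [mul_assoc (_ / x)]
        gcongr
        exact abs_mul_abs_oddProfile_le_one hs (x - y)
    _ = (3 + 2 * (1 + 2 * s)) * q / x := by ring

/-- Near `y = x` the translate `p (x - y)` is not small, but by oddness it integrates to zero
against a constant kernel. -/
theorem norm_setIntegral_symmIntegrand_oddProfile_middle (hs : s ∈ Ico (1 / 2 : ℝ) 1) :
    ∃ C, ∀ x, 2 ≤ x →
      ‖∫ y in Ioc (x / 2) (3 * x / 2), symmIntegrand s (oddProfile s) x y‖ ≤ C * barrier s x := by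
  have hp := oddProfile_boundedC2 hs.1
  refine ⟨(3 + 2 * (1 + 2 * s)) * 5 ^ (1 / 2 + s), fun x hx ↦ ?_⟩
  have hx0 : 0 < x := by linarith
  have hcancel : ∫ y in Ioc (x / 2) (3 * x / 2), symmIntegrand s (oddProfile s) x y =
      ∫ y in Ioc (x / 2) (3 * x / 2), (symmIntegrand s (oddProfile s) x y -
        x ^ (-(1 + 2 * s)) * oddProfile s (x - y)) := by
    rw [integral_sub, integral_const_mul, setIntegral_oddProfile_sub hx0.le, mul_zero, sub_zero]
    · exact (hp.integrableOn_symmIntegrand ⟨by linarith [hs.1], hs.2⟩ x).mono_set fun y hy ↦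
        mem_Ioi.2 (by linarith [hy.1])
    · exact ((hp.continuous.comp (continuous_sub_left x)).integrableOn_Ioc).const_mul _
  rw [hcancel]
  refine (norm_setIntegral_le_of_norm_le_const measure_Ioc_lt_top fun y hy ↦
    abs_symmIntegrand_oddProfile_sub_le hs.1 hx hy.1.le).trans_eq ?_
  rw [Real.volume_real_Ioc_of_le (by linarith)]
  field_simp
  ring

theorem norm_setIntegral_symmIntegrand_oddProfile_far (hs : 1 / 2 ≤ s) :
    ∃ C, ∀ x, 2 ≤ x →
      ‖∫ y in Ioi (3 * x / 2), symmIntegrand s (oddProfile s) x y‖ ≤ C * barrier s x := by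
  have hs0 : 0 < s := by linarith
  refine ⟨5 * 5 ^ (1 / 2 + s) / (2 * s), fun x hx ↦ ?_⟩
  have hx0 : 0 < x := by linarith
  have hdiff : ∀ y ∈ Ioi (3 * x / 2), |secondDiff (oddProfile s) x y| ≤ 5 * x⁻¹ := by
    intro y hy
    have hxy : x / 2 ≤ y - x := by linarith [mem_Ioi.1 hy]
    have hpx := abs_le.1 (abs_oddProfile_le_inv hs hx0 (le_abs_self x))
    have hplus := abs_le.1 (abs_oddProfile_le_inv hs hx0
      ((by linarith : x ≤ x + y).trans (le_abs_self (x + y))))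
    have hminus := abs_le.1 (abs_oddProfile_le_inv hs (half_pos hx0)
      ((hxy.trans (le_abs_self _)).trans_eq (abs_sub_comm y x)))
    rw [inv_div, div_eq_mul_inv] at hminus
    unfold secondDiff
    exact abs_le.2 ⟨by linarith, by linarith⟩
  have hexp : -(1 + 2 * s) < -1 := by linarith
  calc ‖∫ y in Ioi (3 * x / 2), symmIntegrand s (oddProfile s) x y‖
      ≤ ∫ y in Ioi (3 * x / 2), 5 * x⁻¹ * y ^ (-(1 + 2 * s)) := by
        refine norm_integral_le_of_norm_le
          ((integrableOn_Ioi_rpow_of_lt hexp (by positivity)).const_mul _)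
          ((ae_restrict_mem measurableSet_Ioi).mono fun y hy ↦ ?_)
        have hy0 : 0 < y := by linarith [mem_Ioi.1 hy]
        rw [Real.norm_eq_abs, abs_symmIntegrand s _ _ hy0]
        gcongr
        exact hdiff y hy
    _ = 5 * x⁻¹ * ((3 * x / 2) ^ (-(2 * s)) / (2 * s)) := by
        rw [integral_const_mul, integral_Ioi_rpow_of_lt hexp (by positivity),
          show -(1 + 2 * s) + 1 = -(2 * s) by ring, neg_div_neg_eq]
    _ ≤ 5 * x⁻¹ * (x ^ (-(2 * s)) / (2 * s)) := by
        gcongr ?_ * (?_ / _)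
        exact Real.rpow_le_rpow_of_nonpos hx0 (by linarith) (by linarith)
    _ = 5 * x ^ (-(1 + 2 * s)) / (2 * s) := by
        rw [neg_add, Real.rpow_add hx0, Real.rpow_neg_one]
        ring
    _ ≤ 5 * (5 ^ (1 / 2 + s) * barrier s x) / (2 * s) := by
        gcongr
        exact rpow_le_mul_barrier_of_half_le hs0 hx (by linarith)
    _ = 5 * 5 ^ (1 / 2 + s) / (2 * s) * barrier s x := by ring

theorem isBigO_barrier_of_odd {v : ℝ → ℝ} (hodd : ∀ x, v (-x) = -v x) {R C : ℝ}
    (h : ∀ x, R ≤ x → |v x| ≤ C * barrier s x) : v =O[cocompact ℝ] barrier s := by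
  refine IsBigO.of_bound C (eventually_cocompact_iff.2 ⟨R, fun x hx ↦ ?_⟩)
  rw [Real.norm_eq_abs, Real.norm_of_nonneg (barrier_pos s x).le]
  rcases le_abs.1 hx with hx | hx
  · exact h x hx
  · simpa [hodd, barrier_neg_arg] using h (-x) hx

theorem fracLap_oddProfile_isBigO (hs : s ∈ Ico (1 / 2 : ℝ) 1) :
    fracLap s (oddProfile s) =O[cocompact ℝ] barrier s := by
  have hs' : s ∈ Ioo (0 : ℝ) 1 := ⟨by linarith [hs.1], hs.2⟩
  have hp := oddProfile_boundedC2 hs.1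
  obtain ⟨C₁, h₁⟩ := norm_setIntegral_symmIntegrand_oddProfile_near hs
  obtain ⟨C₂, h₂⟩ := norm_setIntegral_symmIntegrand_oddProfile_middle hs
  obtain ⟨C₃, h₃⟩ := norm_setIntegral_symmIntegrand_oddProfile_far hs.1
  refine isBigO_barrier_of_odd (R := 2) (C := C1s s * (C₁ + C₂ + C₃))
    (hp.fracLap_neg_arg hs' (m := 0) fun x ↦ by rw [oddProfile_neg_arg, zero_sub]) fun x hx ↦ ?_
  have hint := hp.integrableOn_symmIntegrand hs' x
  have hsplit : Ioi (0 : ℝ) = (Ioc 0 (x / 2) ∪ Ioc (x / 2) (3 * x / 2)) ∪ Ioi (3 * x / 2) := by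
    rw [Ioc_union_Ioc_eq_Ioc (by linarith) (by linarith), Ioc_union_Ioi_eq_Ioi (by linarith)]
  rw [hsplit] at hint
  rw [hp.fracLap_eq hs' x, hsplit,
    setIntegral_union (disjoint_left.2 fun y hy hy' ↦ ?_) measurableSet_Ioi hint.left_of_union
      hint.right_of_union,
    setIntegral_union (disjoint_left.2 fun y hy hy' ↦ hy'.1.not_ge hy.2) measurableSet_Ioc
      hint.left_of_union.left_of_union hint.left_of_union.right_of_union,
    abs_mul, abs_of_pos (C1s_pos hs'), mul_assoc, add_mul, add_mul]
  · have := C1s_pos hs'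
    gcongr
    exact (norm_add₃_le).trans (add_le_add_three (h₁ x hx) (h₂ x hx) (h₃ x hx))
  · rcases hy with hy | hy <;> linarith [hy.2, mem_Ioi.1 hy']

theorem one_add_mul_le_rpow_one_add_of_nonpos {p t : ℝ} (hp : p ≤ 0) (ht : -1 < t) :
    1 + p * t ≤ (1 + t) ^ p := by
  have h1t : 0 < 1 + t := by linarith
  calc 1 + p * t ≤ 1 + p * Real.log (1 + t) := by
        gcongr 1 + ?_
        exact mul_le_mul_of_nonpos_left (by linarith [Real.log_le_sub_one_of_pos h1t]) hp
    _ ≤ Real.exp (Real.log (1 + t) * p) := by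
        rw [add_comm, mul_comm p]
        exact Real.add_one_le_exp _
    _ = (1 + t) ^ p := (Real.rpow_def_of_pos h1t p).symm

theorem abs_rpow_sub_barrier_le (hs : 0 < s) {x : ℝ} (hx : x ≠ 0) :
    |x| ^ (-(1 + 2 * s)) - barrier s x ≤ (1 / 2 + s) / x ^ 2 * |x| ^ (-(1 + 2 * s)) := by
  have hx2 : 0 < x ^ 2 := by positivity
  have hfactor : barrier s x = (1 + 1 / x ^ 2) ^ (-(1 / 2 + s)) * |x| ^ (-(1 + 2 * s)) := by
    rw [abs_rpow_eq_sq_rpow, ← Real.mul_rpow (by positivity) hx2.le, add_mul,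
      one_div_mul_cancel hx2.ne', one_mul, add_comm, barrier]
  rw [hfactor, ← one_sub_mul]
  gcongr
  have h := one_add_mul_le_rpow_one_add_of_nonpos (p := -(1 / 2 + s)) (t := 1 / x ^ 2)
    (by linarith) (by linarith [one_div_pos.2 hx2])
  rw [neg_mul, mul_one_div] at h
  linarith

theorem oddProfile_sub_le (hs : s ∈ Ioo (0 : ℝ) 1) {x : ℝ} (hx : 1 ≤ |x|) :
    |oddProfile s x - x * |x| ^ (-(1 + 2 * s))| ≤ 2 * |x| ^ (-(1 + 2 * s)) := by
  have hx0 : x ≠ 0 := abs_pos.1 (one_pos.trans_le hx)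
  have : 0 ≤ |x| ^ (-(1 + 2 * s)) := Real.rpow_nonneg (abs_nonneg x) _
  rw [oddProfile, ← mul_sub, abs_mul, abs_sub_comm,
    abs_of_nonneg (sub_nonneg.2 (barrier_le_abs_rpow hs.1 hx0))]
  calc |x| * (|x| ^ (-(1 + 2 * s)) - barrier s x)
      ≤ |x| * ((1 / 2 + s) / x ^ 2 * |x| ^ (-(1 + 2 * s))) := by
        gcongr
        exact abs_rpow_sub_barrier_le hs.1 hx0
    _ = (1 / 2 + s) * |x|⁻¹ * |x| ^ (-(1 + 2 * s)) := by
        rw [← sq_abs]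
        field_simp
    _ ≤ 2 * 1 * |x| ^ (-(1 + 2 * s)) := by
        gcongr
        · linarith [hs.2]
        · exact inv_le_one_of_one_le₀ hx
    _ = 2 * |x| ^ (-(1 + 2 * s)) := by rw [mul_one]

/-! ### The smooth step -/

/-- A smooth monotone step, equal to `0` on `(-∞, -1]` and to `1` on `[1, ∞)`: it carries the limits
of a transition layer, and its fractional Laplacian is explicit up to `O(barrier)`. -/
def smoothStep (x : ℝ) : ℝ := Real.smoothTransition ((x + 1) / 2)

theorem smoothStep_nonneg (x : ℝ) : 0 ≤ smoothStep x := Real.smoothTransition.nonneg _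

theorem smoothStep_le_one (x : ℝ) : smoothStep x ≤ 1 := Real.smoothTransition.le_one _

theorem smoothStep_of_one_le {x : ℝ} (hx : 1 ≤ x) : smoothStep x = 1 :=
  Real.smoothTransition.one_of_one_le (by linarith)

theorem smoothStep_of_le_neg_one {x : ℝ} (hx : x ≤ -1) : smoothStep x = 0 :=
  Real.smoothTransition.zero_of_nonpos (by linarith)

theorem smoothStep_neg_arg (x : ℝ) : smoothStep (-x) = 1 - smoothStep x := by
  have h := Real.smoothTransition.pos_denom ((x + 1) / 2)
  rw [smoothStep, smoothStep, Real.smoothTransition, Real.smoothTransition,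
    show (-x + 1) / 2 = 1 - (x + 1) / 2 by ring, sub_sub_cancel,
    add_comm (expNegInvGlue (1 - _)), eq_sub_iff_add_eq, ← add_div, add_comm, div_self h.ne']

theorem smoothStep_boundedC2 : BoundedC2 smoothStep :=
  ⟨(Real.smoothTransition.contDiff (n := 2)).comp (by fun_prop), 1, fun x ↦ by
    rw [abs_of_nonneg (smoothStep_nonneg x)]
    exact smoothStep_le_one x⟩

theorem abs_secondDiff_smoothStep_add_indicator_le {x y : ℝ} (hx : 1 ≤ x) (hy : 0 < y) :
    |secondDiff smoothStep x y + (Ioi x).indicator 1 y| ≤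
      (Ioc (x - 1) (x + 1)).indicator 1 y := by
  have hdiff : secondDiff smoothStep x y = smoothStep (x - y) - 1 := by
    rw [secondDiff, smoothStep_of_one_le (by linarith : 1 ≤ x + y), smoothStep_of_one_le hx]
    ring
  have h0 := smoothStep_nonneg (x - y)
  have h1 := smoothStep_le_one (x - y)
  simp only [hdiff, indicator_apply, mem_Ioi, mem_Ioc, Pi.one_apply]
  rcases le_or_gt y (x - 1) with hnear | hnear
  · rw [smoothStep_of_one_le (by linarith), if_neg (by linarith), if_neg fun h ↦ by linarith [h.1]]
    simp
  rcases le_or_gt y (x + 1) with hmid | hmid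
  · rw [if_pos (show x - 1 < y ∧ y ≤ x + 1 from ⟨hnear, hmid⟩)]
    split_ifs <;> exact abs_le.2 ⟨by linarith, by linarith⟩
  · rw [smoothStep_of_le_neg_one (by linarith), if_pos (by linarith),
      if_neg fun h ↦ by linarith [h.2]]
    simp

theorem setIntegral_Ioi_indicator_rpow (hs : 0 < s) {x : ℝ} (hx : 0 < x) :
    ∫ y in Ioi 0, (Ioi x).indicator (fun y ↦ y ^ (-(1 + 2 * s))) y =
      x ^ (-(2 * s)) / (2 * s) := by
  rw [setIntegral_indicator measurableSet_Ioi, inter_eq_right.2 (Ioi_subset_Ioi hx.le),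
    integral_Ioi_rpow_of_lt (by linarith) hx, show -(1 + 2 * s) + 1 = -(2 * s) by ring,
    neg_div_neg_eq]

/-- Away from `y = x` the second difference of the smooth step at `x` is that of the Heaviside
function, whose fractional Laplacian is `-C1s s * x ^ (-2 s) / (2 s)`. -/
theorem abs_setIntegral_symmIntegrand_smoothStep_add_le (hs : s ∈ Ioo (0 : ℝ) 1) {x : ℝ}
    (hx : 2 ≤ x) :
    |(∫ y in Ioi 0, symmIntegrand s smoothStep x y) + x ^ (-(2 * s)) / (2 * s)| ≤
      2 * (5 ^ (1 / 2 + s) * barrier s x) := by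
  have hx0 : 0 < x := by linarith
  set q := 5 ^ (1 / 2 + s) * barrier s x
  have hheav : IntegrableOn ((Ioi x).indicator fun y ↦ y ^ (-(1 + 2 * s))) (Ioi 0) :=
    ((integrable_indicator_iff measurableSet_Ioi).2
      (integrableOn_Ioi_rpow_of_lt (by linarith [hs.1]) hx0)).integrableOn
  have hwindow : Ioc (x - 1) (x + 1) ⊆ Ioi 0 := fun y hy ↦ mem_Ioi.2 (by linarith [hy.1])
  have hq : ∫ y in Ioi 0, (Ioc (x - 1) (x + 1)).indicator (fun _ ↦ q) y = 2 * q := by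
    rw [setIntegral_indicator measurableSet_Ioc, inter_eq_right.2 hwindow, setIntegral_const,
      Real.volume_real_Ioc_of_le (by linarith), smul_eq_mul]
    ring
  have hqint : IntegrableOn ((Ioc (x - 1) (x + 1)).indicator fun _ ↦ q) (Ioi 0) :=
    ((integrable_indicator_iff measurableSet_Ioc).2
      continuous_const.integrableOn_Ioc).integrableOn
  rw [← setIntegral_Ioi_indicator_rpow hs.1 hx0, ← Real.norm_eq_abs,
    ← integral_add (smoothStep_boundedC2.integrableOn_symmIntegrand hs x) hheav, ← hq]
  refine norm_integral_le_of_norm_le hqint ((ae_restrict_mem measurableSet_Ioi).mono fun y hy ↦ ?_)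
  have hpow : 0 ≤ y ^ (-(1 + 2 * s)) := Real.rpow_nonneg (mem_Ioi.1 hy).le _
  calc ‖symmIntegrand s smoothStep x y + (Ioi x).indicator (fun y ↦ y ^ (-(1 + 2 * s))) y‖
      = |secondDiff smoothStep x y + (Ioi x).indicator 1 y| * y ^ (-(1 + 2 * s)) := by
        rw [Real.norm_eq_abs, symmIntegrand, ← abs_of_nonneg hpow, ← abs_mul, abs_of_nonneg hpow,
          add_mul]
        simp only [indicator_apply, Pi.one_apply, ite_mul, one_mul, zero_mul]
    _ ≤ (Ioc (x - 1) (x + 1)).indicator 1 y * y ^ (-(1 + 2 * s)) := by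
        gcongr
        exact abs_secondDiff_smoothStep_add_indicator_le (by linarith) hy
    _ ≤ (Ioc (x - 1) (x + 1)).indicator (fun _ ↦ q) y := by
        simp only [indicator_apply, Pi.one_apply, ite_mul, one_mul, zero_mul]
        split_ifs with h
        · exact rpow_le_mul_barrier_of_half_le hs.1 hx (by linarith [h.1])
        · exact le_rfl

theorem fracLap_smoothStep_add_isBigO (hs : s ∈ Ioo (0 : ℝ) 1) :
    (fun x ↦ fracLap s smoothStep x + C1s s / (2 * s) * oddProfile s x)
      =O[cocompact ℝ] barrier s := by
  have hs0 := hs.1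
  have hC := C1s_pos hs
  refine isBigO_barrier_of_odd (R := 2)
    (C := C1s s * (2 * 5 ^ (1 / 2 + s) + 1 / (2 * s) * (2 * 5 ^ (1 / 2 + s)))) (fun x ↦ ?_)
    fun x hx ↦ ?_
  · rw [smoothStep_boundedC2.fracLap_neg_arg hs smoothStep_neg_arg, oddProfile_neg_arg]
    ring
  have hx0 : 0 < x := by linarith
  have hstep := abs_setIntegral_symmIntegrand_smoothStep_add_le hs hx
  have hprofile : |oddProfile s x - x ^ (-(2 * s))| ≤ 2 * (5 ^ (1 / 2 + s) * barrier s x) := by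
    have h := oddProfile_sub_le hs (x := x) ((by linarith : 1 ≤ x).trans (le_abs_self x))
    rw [abs_of_pos hx0, ← Real.rpow_one_add' hx0.le (by linarith),
      show 1 + -(1 + 2 * s) = -(2 * s) by ring] at h
    exact h.trans (mul_le_mul_of_nonneg_left
      (rpow_le_mul_barrier_of_half_le hs0 hx (by linarith)) two_pos.le)
  calc |fracLap s smoothStep x + C1s s / (2 * s) * oddProfile s x|
      = C1s s * |((∫ y in Ioi 0, symmIntegrand s smoothStep x y) + x ^ (-(2 * s)) / (2 * s)) +
          1 / (2 * s) * (oddProfile s x - x ^ (-(2 * s)))| := by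
        rw [smoothStep_boundedC2.fracLap_eq hs, ← abs_of_pos hC, ← abs_mul, abs_of_pos hC]
        ring_nf
    _ ≤ C1s s * (2 * (5 ^ (1 / 2 + s) * barrier s x) +
          1 / (2 * s) * (2 * (5 ^ (1 / 2 + s) * barrier s x))) := by
        gcongr
        refine (abs_add_le _ _).trans (add_le_add hstep ?_)
        rw [abs_mul, abs_of_pos (by positivity)]
        gcongr
    _ = C1s s * (2 * 5 ^ (1 / 2 + s) + 1 / (2 * s) * (2 * 5 ^ (1 / 2 + s))) * barrier s x := by
        ring

theorem sub_isBigO_rpow_of_deriv_isBigO_barrier (hs : 0 < s) (hu : ContDiff ℝ 1 u)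
    (hu' : deriv u =O[⊤] barrier s) {l : ℝ} (hl : Tendsto u atTop (𝓝 l)) :
    (fun x ↦ u x - l) =O[atTop] fun x ↦ |x| ^ (-(2 * s)) := by
  obtain ⟨K, hK⟩ := isBigO_top_barrier_iff.1 hu'
  have hK0 : 0 ≤ K := nonneg_of_mul_nonneg_left ((abs_nonneg _).trans (hK 0)) (barrier_pos s 0)
  have hcont : Continuous (deriv u) := hu.continuous_deriv le_rfl
  have hint : Integrable (deriv u) := ((integrable_barrier hs).const_mul K).mono'
    hcont.aestronglyMeasurable (Eventually.of_forall hK)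
  refine IsBigO.of_bound (K / (2 * s)) ((eventually_gt_atTop 0).mono fun x hx ↦ ?_)
  have hexp : -(1 + 2 * s) < -1 := by linarith
  calc ‖u x - l‖ = ‖∫ t in Ioi x, deriv u t‖ := by
        rw [integral_Ioi_of_hasDerivAt_of_tendsto'
          (fun t _ ↦ (hu.differentiable one_ne_zero t).hasDerivAt) hint.integrableOn hl,
          norm_sub_rev]
    _ ≤ ∫ t in Ioi x, K * t ^ (-(1 + 2 * s)) := by
        refine norm_integral_le_of_norm_le ((integrableOn_Ioi_rpow_of_lt hexp hx).const_mul K)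
          ((ae_restrict_mem measurableSet_Ioi).mono fun t ht ↦ (hK t).trans ?_)
        have ht0 : 0 < t := hx.trans ht
        gcongr
        simpa only [abs_of_pos ht0] using barrier_le_abs_rpow hs ht0.ne'
    _ = K / (2 * s) * ‖|x| ^ (-(2 * s))‖ := by
        rw [integral_const_mul, integral_Ioi_rpow_of_lt hexp hx, abs_of_pos hx,
          Real.norm_of_nonneg (by positivity), show -(1 + 2 * s) + 1 = -(2 * s) by ring,
          neg_div_neg_eq]
        ring

theorem TransitionLayer.sub_smoothStep_isBigO {f φ : ℝ → ℝ} (hs : s ∈ Ioo (0 : ℝ) 1)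
    (hf : PeriodicReaction f) (hφ : TransitionLayer s f φ) :
    (fun x ↦ φ x - smoothStep x) =O[cocompact ℝ] fun x ↦ |x| ^ (-(2 * s)) := by
  have hφ1 : ContDiff ℝ 1 φ := hφ.contDiff.of_le (by norm_num)
  have hφ' := hφ.deriv_isBigO hs hf
  rw [cocompact_eq_atBot_atTop, isBigO_sup]
  constructor
  · have hrefl : (deriv fun x ↦ φ (-x)) =O[⊤] barrier s := by
      obtain ⟨K, hK⟩ := isBigO_top_barrier_iff.1 hφ'
      refine isBigO_top_barrier_iff.2 ⟨K, fun x ↦ ?_⟩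
      simpa [deriv_comp_neg, barrier_neg_arg] using hK (-x)
    have h := (sub_isBigO_rpow_of_deriv_isBigO_barrier hs.1 (hφ1.comp contDiff_neg) hrefl
      (hφ.tendsto_atBot.comp tendsto_neg_atTop_atBot)).comp_tendsto tendsto_neg_atBot_atTop
    refine h.congr' ((eventually_le_atBot (-1)).mono fun x hx ↦ ?_)
      (Eventually.of_forall fun x ↦ by simp)
    simp [smoothStep_of_le_neg_one hx]
  · refine (sub_isBigO_rpow_of_deriv_isBigO_barrier hs.1 hφ1 hφ' hφ.tendsto_atTop).congr'
      ((eventually_ge_atTop 1).mono fun x hx ↦ ?_) EventuallyEq.rfl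
    simp only [smoothStep_of_one_le hx]

/-! ### First-order asymptotics -/

theorem sub_taylor_isBigO_sq {g : ℝ → ℝ} (hg : ContDiff ℝ 2 g) :
    (fun v ↦ g v - g 0 - deriv g 0 * v) =O[𝓝 0] fun v ↦ v ^ 2 := by
  have htaylor := (taylor_isLittleO_univ (x₀ := 0) (n := 2) hg).isBigO
  have hquad : (fun v : ℝ ↦ iteratedDeriv 2 g 0 / 2 * v ^ 2) =O[𝓝 0] fun v ↦ v ^ 2 :=
    (isBigO_refl _ _).const_mul_left _
  simp only [sub_zero] at htaylor
  refine (htaylor.add hquad).congr_left fun v ↦ ?_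
  simp only [taylorWithinEval_succ, taylor_within_zero_eval, iteratedDerivWithin_univ,
    smul_eq_mul, sub_zero]
  norm_num
  ring

theorem rpow_sq_isBigO_barrier (hs : 1 / 2 ≤ s) :
    (fun x : ℝ ↦ |x| ^ (-(2 * s)) * |x| ^ (-(2 * s))) =O[cocompact ℝ] barrier s := by
  refine IsBigO.of_bound (2 ^ (1 / 2 + s)) (eventually_cocompact_iff.2 ⟨1, fun x hx ↦ ?_⟩)
  have hx0 : 0 < |x| := one_pos.trans_le hx
  rw [← Real.rpow_add hx0, Real.norm_of_nonneg (by positivity),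
    Real.norm_of_nonneg (barrier_pos s x).le]
  exact (Real.rpow_le_rpow_of_exponent_le hx (by linarith)).trans
    (abs_rpow_le_mul_barrier (by linarith) two_pos (abs_pos.1 hx0) (by nlinarith [sq_abs x]))

theorem oddProfile_isBigO_rpow (hs : 0 < s) :
    oddProfile s =O[cocompact ℝ] fun x ↦ |x| ^ (-(2 * s)) := by
  refine IsBigO.of_bound 1 (eventually_cocompact_iff.2 ⟨1, fun x hx ↦ ?_⟩)
  have hx0 : 0 < |x| := one_pos.trans_le hx
  rw [one_mul, Real.norm_eq_abs, Real.norm_of_nonneg (Real.rpow_nonneg hx0.le _), oddProfile,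
    abs_mul, abs_of_pos (barrier_pos s x), show -(2 * s) = 1 + -(1 + 2 * s) by ring,
    Real.rpow_add hx0, Real.rpow_one]
  gcongr
  exact barrier_le_abs_rpow hs (abs_pos.1 hx0)

theorem periodic_comp_sub_smoothStep_eventuallyEq {g : ℝ → ℝ} (hg : Function.Periodic g 1)
    (φ : ℝ → ℝ) : (fun x ↦ g (φ x - smoothStep x)) =ᶠ[cocompact ℝ] fun x ↦ g (φ x) := by
  refine eventually_cocompact_iff.2 ⟨1, fun x hx ↦ ?_⟩
  rcases le_abs.1 hx with hx | hx
  · simp only [smoothStep_of_one_le hx, hg.sub_eq]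
  · simp only [smoothStep_of_le_neg_one (by linarith : x ≤ -1), sub_zero]

/-- The coefficient of `-oddProfile` in the expansion of a transition layer; it balances the
reaction `f' (0) η` against the fractional Laplacian of the step. -/
def layerCoeff (s : ℝ) (f : ℝ → ℝ) : ℝ := C1s s / (2 * s * deriv f 0)

namespace TransitionLayer

variable {f φ : ℝ → ℝ}

theorem sub_smoothStep_tendsto_zero (hs : s ∈ Ioo (0 : ℝ) 1) (hf : PeriodicReaction f)
    (hφ : TransitionLayer s f φ) :
    Tendsto (fun x ↦ φ x - smoothStep x) (cocompact ℝ) (𝓝 0) :=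
  (hφ.sub_smoothStep_isBigO hs hf).trans_tendsto
    ((tendsto_rpow_neg_atTop (mul_pos two_pos hs.1)).comp
      (tendsto_norm_cocompact_atTop (E := ℝ)))

theorem comp_sub_taylor_isBigO (hs : s ∈ Ico (1 / 2 : ℝ) 1) (hf : PeriodicReaction f)
    (hφ : TransitionLayer s f φ) {g : ℝ → ℝ} (hg : ContDiff ℝ 2 g) (hper : Function.Periodic g 1) :
    (fun x ↦ g (φ x) - g 0 - deriv g 0 * (φ x - smoothStep x)) =O[cocompact ℝ] barrier s := by
  have hs' : s ∈ Ioo (0 : ℝ) 1 := ⟨by linarith [hs.1], hs.2⟩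
  have hη := hφ.sub_smoothStep_isBigO hs' hf
  have hη0 := hφ.sub_smoothStep_tendsto_zero hs' hf
  have hsq : (fun x ↦ (φ x - smoothStep x) ^ 2) =O[cocompact ℝ] barrier s := by
    simpa only [sq] using (hη.mul hη).trans (rpow_sq_isBigO_barrier hs.1)
  refine (((sub_taylor_isBigO_sq hg).comp_tendsto hη0).trans hsq).congr' ?_ EventuallyEq.rfl
  filter_upwards [periodic_comp_sub_smoothStep_eventuallyEq hper φ] with x hx
  simp only [Function.comp_apply, hx]

theorem sub_smoothStep_add_isBigO (hs : s ∈ Ico (1 / 2 : ℝ) 1) (hf : PeriodicReaction f)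
    (hφ : TransitionLayer s f φ) :
    (fun x ↦ φ x - smoothStep x + layerCoeff s f * oddProfile s x) =O[⊤] barrier s := by
  have hs' : s ∈ Ioo (0 : ℝ) 1 := ⟨by linarith [hs.1], hs.2⟩
  have hs0 := hs'.1
  have hα := hf.deriv_zero_pos
  have hη := hφ.boundedC2.sub smoothStep_boundedC2
  have hp := (oddProfile_boundedC2 hs.1).const_mul (layerCoeff s f)
  have hcoeff : deriv f 0 * layerCoeff s f = C1s s / (2 * s) := by
    unfold layerCoeff
    field_simp
  have hdecay := (hφ.sub_smoothStep_tendsto_zero hs' hf).add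
    ((oddProfile_tendsto_zero hs.1).const_mul (layerCoeff s f))
  rw [mul_zero, add_zero] at hdecay
  refine isBigO_barrier_of_fracLap hs' hα (A := fun _ ↦ deriv f 0) (hη.add hp) hdecay
    (Eventually.of_forall fun _ ↦ le_rfl) ?_
  refine (((hφ.comp_sub_taylor_isBigO hs hf (hf.contDiff.of_le (by norm_num)) hf.periodic).sub
    (fracLap_smoothStep_add_isBigO hs')).add
    ((fracLap_oddProfile_isBigO hs).const_mul_left (layerCoeff s f))).congr_left fun x ↦ ?_
  rw [hη.fracLap_add hs' hp, hφ.boundedC2.fracLap_sub hs' smoothStep_boundedC2,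
    (oddProfile_boundedC2 hs.1).fracLap_const_mul hs', hφ.fracLap_eq, hf.map_zero]
  linear_combination oddProfile s x * hcoeff

theorem deriv_comp_add_isBigO (hs : s ∈ Ico (1 / 2 : ℝ) 1) (hf : PeriodicReaction f)
    (hφ : TransitionLayer s f φ) :
    (fun x ↦ deriv f (φ x) - deriv f 0 + deriv (deriv f) 0 * layerCoeff s f * oddProfile s x)
      =O[cocompact ℝ] barrier s :=
  ((hφ.comp_sub_taylor_isBigO hs hf hf.contDiff_deriv (deriv_periodic hf.periodic)).add
    (((hφ.sub_smoothStep_add_isBigO hs hf).mono le_top).const_mul_left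
      (deriv (deriv f) 0))).congr_left fun x ↦ by ring

theorem deriv_comp_sub_mul_oddProfile_isBigO (hs : s ∈ Ico (1 / 2 : ℝ) 1)
    (hf : PeriodicReaction f) (hφ : TransitionLayer s f φ) :
    (fun x ↦ (deriv f (φ x) - deriv f 0) * oddProfile s x) =O[cocompact ℝ] barrier s := by
  have hs' : s ∈ Ioo (0 : ℝ) 1 := ⟨by linarith [hs.1], hs.2⟩
  have hp := oddProfile_isBigO_rpow hs'.1
  have hp1 : oddProfile s =O[cocompact ℝ] fun _ ↦ (1 : ℝ) :=
    (oddProfile_tendsto_zero hs.1).isBigO_one ℝ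
  have hlin : (fun x ↦ deriv (deriv f) 0 * (φ x - smoothStep x) * oddProfile s x)
      =O[cocompact ℝ] barrier s :=
    (((hφ.sub_smoothStep_isBigO hs' hf).const_mul_left _).mul hp).trans
      (rpow_sq_isBigO_barrier hs.1)
  have hrem := (hφ.comp_sub_taylor_isBigO hs hf hf.contDiff_deriv
    (deriv_periodic hf.periodic)).mul hp1
  simp only [mul_one] at hrem
  exact (hrem.add hlin).congr_left fun x ↦ by ring

end TransitionLayer

/-- The coefficient of `oddProfile` in the expansion of a layer corrector, the value that cancels
the terms of order `oddProfile` in the corrector equation. -/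
def correctorCoeff (s : ℝ) (f : ℝ → ℝ) (b : ℝ) : ℝ :=
  b * deriv (deriv f) 0 * layerCoeff s f / deriv f 0

theorem barrier_le_div (hs : 0 < s) (x : ℝ) : barrier s x ≤ 2 / (1 + |x| ^ (1 + 2 * s)) := by
  have hpow : barrier s x * |x| ^ (1 + 2 * s) ≤ 1 := by
    rcases eq_or_ne x 0 with rfl | hx
    · rw [abs_zero, Real.zero_rpow (by linarith), mul_zero]
      exact zero_le_one
    · rw [← le_div_iff₀ (by positivity), one_div, ← Real.rpow_neg (abs_nonneg x)]
      exact barrier_le_abs_rpow hs hx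
  rw [le_div_iff₀ (by positivity), mul_add, mul_one]
  linarith [barrier_le_one hs x]

theorem eventually_abs_le_div_of_isBigO_barrier (hs : 0 < s) {v : ℝ → ℝ}
    (hv : v =O[⊤] barrier s) :
    ∀ᶠ K in atTop, ∀ x, |v x| ≤ K / (1 + |x| ^ (1 + 2 * s)) := by
  obtain ⟨C, hC⟩ := isBigO_top_barrier_iff.1 hv
  filter_upwards [eventually_ge_atTop (2 * |C|)] with K hK x
  calc |v x| ≤ |C| * (2 / (1 + |x| ^ (1 + 2 * s))) :=
        (hC x).trans (mul_le_mul (le_abs_self C) (barrier_le_div hs x) (barrier_pos s x).le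
          (abs_nonneg C))
    _ = 2 * |C| / (1 + |x| ^ (1 + 2 * s)) := by ring
    _ ≤ K / (1 + |x| ^ (1 + 2 * s)) := by gcongr

namespace LayerCorrector

variable {f φ ψ : ℝ → ℝ} {b c : ℝ}

theorem sub_oddProfile_isBigO (hs : s ∈ Ico (1 / 2 : ℝ) 1) (hf : PeriodicReaction f)
    (hφ : TransitionLayer s f φ) (hψ : LayerCorrector s f φ b c ψ) :
    (fun x ↦ ψ x - correctorCoeff s f b * oddProfile s x) =O[⊤] barrier s := by
  have hs' : s ∈ Ioo (0 : ℝ) 1 := ⟨by linarith [hs.1], hs.2⟩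
  have hα := hf.deriv_zero_pos
  set K := correctorCoeff s f b
  have hKα : K * deriv f 0 = b * deriv (deriv f) 0 * layerCoeff s f := div_mul_cancel₀ _ hα.ne'
  have hp := oddProfile_boundedC2 hs.1
  have hforcing : (fun x ↦ layerForcing f φ b c x + K * deriv f 0 * oddProfile s x)
      =O[cocompact ℝ] barrier s :=
    (((hφ.deriv_comp_add_isBigO hs hf).const_mul_left b).add
      (((hφ.deriv_isBigO hs' hf).mono le_top).const_mul_left c)).congr_left fun x ↦ by
        rw [layerForcing, hKα]
        ring
  have hdecay := hψ.tendsto_zero.sub ((oddProfile_tendsto_zero hs.1).const_mul K)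
  rw [mul_zero, sub_zero] at hdecay
  refine isBigO_barrier_of_fracLap hs' (half_pos hα) (hψ.boundedC2.sub (hp.const_mul K)) hdecay
    (hφ.eventually_le_deriv hf) ?_
  refine ((hforcing.add ((hφ.deriv_comp_sub_mul_oddProfile_isBigO hs hf).const_mul_left K)).sub
    ((fracLap_oddProfile_isBigO hs).const_mul_left K)).congr_left fun x ↦ ?_
  rw [hψ.boundedC2.fracLap_sub hs' (hp.const_mul K), hp.fracLap_const_mul hs', hψ.fracLap_eq]
  ring

theorem eventually_abs_sub_le_div (hs : s ∈ Ico (1 / 2 : ℝ) 1) (hf : PeriodicReaction f)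
    (hφ : TransitionLayer s f φ) (hψ : LayerCorrector s f φ b c ψ) :
    ∀ᶠ K in atTop, ∀ x, 1 ≤ |x| →
      |ψ x - correctorCoeff s f b * x / |x| ^ (1 + 2 * s)| ≤ K / |x| ^ (1 + 2 * s) := by
  have hs0 : 0 < s := by linarith [hs.1]
  obtain ⟨C, hC⟩ := isBigO_top_barrier_iff.1 (hψ.sub_oddProfile_isBigO hs hf hφ)
  set K₂ := correctorCoeff s f b
  filter_upwards [eventually_ge_atTop (|C| + |K₂| * 2)] with K hK x hx
  have hx0 : 0 < |x| := one_pos.trans_le hx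
  simp only [div_eq_mul_inv, ← Real.rpow_neg hx0.le]
  calc |ψ x - K₂ * x * |x| ^ (-(1 + 2 * s))|
      = |(ψ x - K₂ * oddProfile s x) + K₂ * (oddProfile s x - x * |x| ^ (-(1 + 2 * s)))| := by
        ring_nf
    _ ≤ |C| * |x| ^ (-(1 + 2 * s)) + |K₂| * (2 * |x| ^ (-(1 + 2 * s))) := by
        refine (abs_add_le _ _).trans (add_le_add ((hC x).trans ?_) ?_)
        · exact mul_le_mul (le_abs_self C) (barrier_le_abs_rpow hs0 (abs_pos.1 hx0))
            (barrier_pos s x).le (abs_nonneg C)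
        · rw [abs_mul]
          gcongr
          exact oddProfile_sub_le ⟨hs0, hs.2⟩ hx
    _ = (|C| + |K₂| * 2) * |x| ^ (-(1 + 2 * s)) := by ring
    _ ≤ K * |x| ^ (-(1 + 2 * s)) := by gcongr

end LayerCorrector

/-! ### The corrector equation of a periodic potential -/

theorem corrector_behavior_general (hs : s ∈ Ioo (0 : ℝ) 1) {f φ ψ : ℝ → ℝ} {b c : ℝ}
    (hf : PeriodicReaction f) (hφ : TransitionLayer s f φ) (hψ : LayerCorrector s f φ b c ψ) :
    ∃ K₂ K₃ : ℝ, 0 < K₃ ∧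
      (1 / 2 ≤ s → ∀ x : ℝ, 1 ≤ |x| →
        |ψ x - K₂ * x / |x| ^ (1 + 2 * s)| ≤ K₃ / |x| ^ (1 + 2 * s)) ∧
      (∀ x : ℝ,
        |deriv ψ x| ≤ K₃ / (1 + |x| ^ (1 + 2 * s)) ∧
        |iteratedDeriv 2 ψ x| ≤ K₃ / (1 + |x| ^ (1 + 2 * s))) := by
  have hexpansion := eventually_imp_distrib_left.2 fun h : 1 / 2 ≤ s ↦
    hψ.eventually_abs_sub_le_div ⟨h, hs.2⟩ hf hφ
  have hderiv := eventually_abs_le_div_of_isBigO_barrier hs.1 (hψ.deriv_isBigO hs hf hφ)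
  have hderiv₂ := eventually_abs_le_div_of_isBigO_barrier hs.1 (hψ.deriv_deriv_isBigO hs hf hφ)
  obtain ⟨K, hK, h₀, h₁, h₂⟩ :=
    ((eventually_gt_atTop 0).and (hexpansion.and (hderiv.and hderiv₂))).exists
  refine ⟨correctorCoeff s f b, K, hK, h₀, fun x ↦ ⟨h₁ x, ?_⟩⟩
  simpa only [iteratedDeriv_succ, iteratedDeriv_zero] using h₂ x

theorem WAssump.deriv_zero {W : ℝ → ℝ} (hW : WAssump s W) : deriv W 0 = 0 := by
  obtain ⟨-, -, hzero, hpos, -, -⟩ := hW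
  refine IsLocalMin.deriv_eq_zero (Eventually.of_forall fun v ↦ ?_)
  rw [show W 0 = 0 by simpa using hzero 0]
  by_cases h : ∃ k : ℤ, (k : ℝ) = v
  · obtain ⟨k, rfl⟩ := h
    exact (hzero k).ge
  · exact (hpos v (not_exists.1 h)).le

theorem WAssump.periodicReaction_deriv {W : ℝ → ℝ} (hW : WAssump s W) :
    PeriodicReaction (deriv W) := by
  obtain ⟨⟨_, -, hsmooth, -⟩, hper, -, -, hα, -⟩ := id hW
  refine ⟨hsmooth.deriv', deriv_periodic hper, hW.deriv_zero, ?_⟩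
  simpa only [iteratedDeriv_succ, iteratedDeriv_zero] using hα

theorem IsLayerSolution.transitionLayer {W φ : ℝ → ℝ} (hφ : IsLayerSolution s W φ) :
    TransitionLayer s (deriv W) φ :=
  let ⟨hsmooth, heq, _, hbot, htop, _⟩ := hφ
  ⟨hsmooth, heq, hbot, htop⟩

theorem IsCorrector.layerCorrector {W φ ψ : ℝ → ℝ} {L : ℝ} (hψ : IsCorrector s L W φ ψ) :
    LayerCorrector s (deriv W) φ (L / iteratedDeriv 2 W 0) (L / ∫ y, (deriv φ y) ^ 2) ψ := by
  obtain ⟨hsmooth, -, heq, hbot, htop⟩ := hψ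
  refine ⟨hsmooth, fun x ↦ ?_, ?_⟩
  · rw [heq x, layerForcing, add_assoc]
    simp only [iteratedDeriv_succ, iteratedDeriv_zero]
  · rw [cocompact_eq_atBot_atTop]
    exact hbot.sup htop

end

/-- **Behavior of the corrector `ψ` (Lemma 6.4).** Under (W), for the bounded `C^{3,β}`
corrector `ψ` associated with `L` there are `K₂` and `K₃ > 0` (depending on `L`) with:
for `s ≥ 1/2`, `|ψ(x) − K₂ x/|x|^{1+2s}| ≤ K₃/|x|^{1+2s}` for `|x| ≥ 1`; and for every
`s ∈ (0,1)` and all `x`, `|ψ'(x)| ≤ K₃/(1+|x|^{1+2s})` and `|ψ''(x)| ≤ K₃/(1+|x|^{1+2s})`. -/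
theorem corrector_behavior
    (s : ℝ) (hs : s ∈ Set.Ioo (0:ℝ) 1)
    (W : ℝ → ℝ) (hW : WAssump s W)
    (φ : ℝ → ℝ) (hφ : IsLayerSolution s W φ)
    (L : ℝ) (ψ : ℝ → ℝ) (hψ : IsCorrector s L W φ ψ) :
    ∃ K₂ K₃ : ℝ, 0 < K₃ ∧
      (1/2 ≤ s → ∀ x : ℝ, 1 ≤ |x| →
        |ψ x - K₂ * x / |x| ^ (1 + 2*s)| ≤ K₃ / |x| ^ (1 + 2*s)) ∧
      (∀ x : ℝ,
        |deriv ψ x| ≤ K₃ / (1 + |x| ^ (1 + 2*s)) ∧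
        |iteratedDeriv 2 ψ x| ≤ K₃ / (1 + |x| ^ (1 + 2*s))) := by
  exact corrector_behavior_general hs hW.periodicReaction_deriv hφ.transitionLayer
    hψ.layerCorrector
end

section
/- Claim 1 (series limits). Let s ∈ (0,1), i₀ ∈ ℤ, γ ∈ (−1/2, 1/2] and x = i₀ + γ. Then: (a) the limit lim_{n→∞} Σ_{i=−n, i≠i₀}^n (x−i)/|x−i|^{1+2s} exists and equals Σ_{i=1}^∞ ((i+γ)^{−2s} − (i−γ)^{−2s}), an absolutely convergent series, and there is a constant C depending only on s such that the absolute value of this limit is at most C|γ| for every γ ∈ (−1/2,1/2]; (b) Σ_{i=−n}^{i₀−1} 1/|x−i|^{1+2s} → Σ_{i=1}^∞ 1/(i+γ)^{1+2s} as n → ∞; (c) Σ_{i=i₀+1}^{n} 1/|x−i|^{1+2s} → Σ_{i=1}^∞ 1/(i−γ)^{1+2s} as n → ∞. -/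
open Filter

/-!
Listing the indices by their distance from `i₀`, the index `i₀ - 1 - j` gives `x - i = j + 1 + γ`
and `i₀ + 1 + j` gives `x - i = -(j + 1 - γ)`, so the truncation at `n` leaves `n + i₀` terms to the
left of `i₀` and `n - i₀` to the right. The one-sided sums in (b) and (c) are therefore partial sums
of shifted `p`-series with exponent `1 + 2s > 1`.

In (a) the one-sided series of `(j + 1 ± γ) ^ (-2s)` may diverge, but their terms tend to zero, so
changing the lengths of the two partial sums from `n ± i₀` to `n` costs `o(1)`. What remains is a
partial sum of the paired series, whose `j`-th term is `O(|γ| (j + 1) ^ (-(1 + 2s)))` by the mean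
value inequality.
-/

section IntegerIntervals

variable {M : Type*} [AddCommMonoid M] (f : ℤ → M)

lemma sum_Icc_eq_sum_range_add (a b : ℤ) :
    ∑ i ∈ Finset.Icc a b, f i = ∑ j ∈ Finset.range (b + 1 - a).toNat, f (a + j) := by
  simp [Int.Icc_eq_finset_map]

lemma sum_Icc_eq_sum_range_sub (a b : ℤ) :
    ∑ i ∈ Finset.Icc a b, f i = ∑ j ∈ Finset.range (b + 1 - a).toNat, f (b - j) := by
  rw [sum_Icc_eq_sum_range_add, ← Finset.sum_range_reflect]
  refine Finset.sum_congr rfl fun j hj => congrArg f ?_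
  have := Finset.mem_range.1 hj
  omega

lemma sum_Icc_erase {a b c : ℤ} (hab : a ≤ b) (hbc : b ≤ c) :
    ∑ i ∈ (Finset.Icc a c).erase b, f i =
      ∑ i ∈ Finset.Icc a (b - 1), f i + ∑ i ∈ Finset.Icc (b + 1) c, f i := by
  have hdisj : Disjoint (Finset.Icc a (b - 1)) (Finset.Icc (b + 1) c) :=
    Finset.disjoint_left.2 fun i => by simp only [Finset.mem_Icc]; omega
  have hunion : (Finset.Icc a c).erase b = Finset.Icc a (b - 1) ∪ Finset.Icc (b + 1) c := by
    ext i
    simp only [Finset.mem_erase, Finset.mem_Icc, Finset.mem_union]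
    omega
  rw [hunion, Finset.sum_union hdisj]

end IntegerIntervals

section OneSidedLimits

variable {M : Type*} [AddCommMonoid M] [TopologicalSpace M] {f : ℤ → M} {c : ℤ} {a : M}

lemma tendsto_natCast_add_toNat_atTop (k : ℤ) :
    Tendsto (fun n : ℕ => ((n : ℤ) + k).toNat) atTop atTop :=
  tendsto_atTop.2 fun b => by
    filter_upwards [eventually_ge_atTop (b + k.natAbs)] with n hn
    omega

lemma tendsto_sum_Icc_neg_natCast
    (h : Tendsto (fun n => ∑ j ∈ Finset.range n, f (c - j)) atTop (nhds a)) :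
    Tendsto (fun n : ℕ => ∑ i ∈ Finset.Icc (-(n : ℤ)) c, f i) atTop (nhds a) := by
  refine (h.comp (tendsto_natCast_add_toNat_atTop (c + 1))).congr fun n => ?_
  rw [sum_Icc_eq_sum_range_sub, Function.comp_apply, sub_neg_eq_add, add_comm (c + 1)]

lemma tendsto_sum_Icc_natCast
    (h : Tendsto (fun n => ∑ j ∈ Finset.range n, f (c + j)) atTop (nhds a)) :
    Tendsto (fun n : ℕ => ∑ i ∈ Finset.Icc c (n : ℤ), f i) atTop (nhds a) := by
  refine (h.comp (tendsto_natCast_add_toNat_atTop (1 - c))).congr fun n => ?_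
  rw [sum_Icc_eq_sum_range_add, Function.comp_apply, add_sub_assoc]

end OneSidedLimits

section PuncturedLimits

variable {G : Type*} [AddCommGroup G] [TopologicalSpace G]

lemma tendsto_sum_range_add_sub_sum_range [ContinuousAdd G] {u : ℕ → G}
    (hu : Tendsto u atTop (nhds 0)) (k : ℕ) :
    Tendsto (fun n => ∑ j ∈ Finset.range (n + k), u j - ∑ j ∈ Finset.range n, u j)
      atTop (nhds 0) := by
  simp only [Finset.sum_range_add, add_sub_cancel_left]
  simpa only [Finset.sum_const_zero] using
    tendsto_finsetSum (Finset.range k) fun j _ => (tendsto_add_atTop_iff_nat j).2 hu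

variable [IsTopologicalAddGroup G]

lemma tendsto_sum_range_toNat_sub_sum_range {u : ℕ → G} (hu : Tendsto u atTop (nhds 0)) (k : ℤ) :
    Tendsto (fun n : ℕ =>
      ∑ j ∈ Finset.range ((n : ℤ) + k).toNat, u j - ∑ j ∈ Finset.range n, u j)
      atTop (nhds 0) := by
  obtain ⟨l, rfl | rfl⟩ := k.eq_nat_or_neg
  · exact tendsto_sum_range_add_sub_sum_range hu l
  · rw [← tendsto_add_atTop_iff_nat l]
    have hneg := (tendsto_sum_range_add_sub_sum_range hu l).neg
    rw [neg_zero] at hneg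
    refine hneg.congr fun n => ?_
    have hn : (((n + l : ℕ) : ℤ) + -(l : ℤ)).toNat = n := by omega
    rw [hn, neg_sub]

lemma tendsto_sum_Icc_erase {f : ℤ → G} {c : ℤ} {a : G}
    (hleft : Tendsto (fun j : ℕ => f (c - 1 - j)) atTop (nhds 0))
    (hright : Tendsto (fun j : ℕ => f (c + 1 + j)) atTop (nhds 0))
    (hpair : Tendsto (fun n => ∑ j ∈ Finset.range n, (f (c - 1 - j) + f (c + 1 + j)))
      atTop (nhds a)) :
    Tendsto (fun n : ℕ => ∑ i ∈ (Finset.Icc (-(n : ℤ)) n).erase c, f i) atTop (nhds a) := by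
  have hlim := ((tendsto_sum_range_toNat_sub_sum_range hleft c).add
    (tendsto_sum_range_toNat_sub_sum_range hright (-c))).add hpair
  rw [zero_add, zero_add] at hlim
  refine hlim.congr' ?_
  filter_upwards [eventually_ge_atTop c.natAbs] with n hn
  have hlen_left : c - 1 + 1 - -(n : ℤ) = n + c := by ring
  have hlen_right : (n : ℤ) + 1 - (c + 1) = n + -c := by ring
  rw [sum_Icc_erase f (by omega) (by omega), sum_Icc_eq_sum_range_sub f (-n),
    sum_Icc_eq_sum_range_add, hlen_left, hlen_right, Finset.sum_add_distrib]
  abel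

end PuncturedLimits

section RealPowers

variable {p q r x y γ : ℝ}

lemma div_abs_rpow_one_add (hx : 0 < x) : x / |x| ^ (1 + p) = x ^ (-p) := by
  rw [abs_of_pos hx, Real.rpow_add hx, Real.rpow_one, div_mul_cancel_left₀ hx.ne',
    Real.rpow_neg hx.le]

lemma abs_rpow_neg_sub_rpow_neg_le (hp : 0 ≤ p) (hr : 0 < r) (hx : r ≤ x) (hy : r ≤ y) :
    |x ^ (-p) - y ^ (-p)| ≤ p * (1 / r ^ (1 + p)) * |x - y| := by
  have hderiv (z : ℝ) (hz : z ∈ Set.Ici r) :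
      HasDerivWithinAt (fun t : ℝ => t ^ (-p)) (-p * z ^ (-p - 1)) (Set.Ici r) z :=
    (Real.hasDerivAt_rpow_const (Or.inl (hr.trans_le hz).ne')).hasDerivWithinAt
  have hbound (z : ℝ) (hz : z ∈ Set.Ici r) : ‖-p * z ^ (-p - 1)‖ ≤ p * (1 / r ^ (1 + p)) := by
    have hz0 : 0 < z := hr.trans_le hz
    have hexp : -p - 1 = -(1 + p) := by ring
    rw [norm_mul, norm_neg, Real.norm_of_nonneg hp, Real.norm_of_nonneg (by positivity), one_div,
      ← Real.rpow_neg hr.le, hexp]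
    exact mul_le_mul_of_nonneg_left (Real.rpow_le_rpow_of_nonpos hr hz (by linarith)) hp
  exact (convex_Ici r).norm_image_sub_le_of_norm_hasDerivWithin_le hderiv hbound hy hx

lemma natCast_add_one_add_pos (hγ : -1 < γ) (j : ℕ) : 0 < (j : ℝ) + 1 + γ := by
  linarith [j.cast_nonneg (α := ℝ)]

lemma natCast_add_one_sub_pos (hγ : γ < 1) (j : ℕ) : 0 < (j : ℝ) + 1 - γ := by
  linarith [j.cast_nonneg (α := ℝ)]

lemma tendsto_natCast_add_one_add_rpow_neg (hp : 0 < p) (γ : ℝ) :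
    Tendsto (fun j : ℕ => ((j : ℝ) + 1 + γ) ^ (-p)) atTop (nhds 0) :=
  (tendsto_rpow_neg_atTop hp).comp <| tendsto_atTop_add_const_right _ _ <|
    tendsto_atTop_add_const_right _ _ tendsto_natCast_atTop_atTop

lemma summable_one_div_natCast_add_one_add_rpow (hq : 1 < q) (hγ : -1 < γ) :
    Summable fun j : ℕ => 1 / ((j : ℝ) + 1 + γ) ^ q :=
  ((Real.summable_one_div_nat_add_rpow (1 + γ) q).2 hq).congr fun j => by
    rw [← add_assoc, abs_of_pos (natCast_add_one_add_pos hγ j)]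

lemma summable_one_div_natCast_add_one_sub_rpow (hq : 1 < q) (hγ : γ < 1) :
    Summable fun j : ℕ => 1 / ((j : ℝ) + 1 - γ) ^ q := by
  simpa only [sub_eq_add_neg] using
    summable_one_div_natCast_add_one_add_rpow hq (neg_lt_neg hγ)

lemma tsum_one_div_natCast_add_one_sub_rpow_pos (hq : 1 < q) (hγ : γ < 1) :
    0 < ∑' j : ℕ, 1 / ((j : ℝ) + 1 - γ) ^ q := by
  have hterm (j : ℕ) : 0 < 1 / ((j : ℝ) + 1 - γ) ^ q :=
    one_div_pos.2 (Real.rpow_pos_of_pos (natCast_add_one_sub_pos hγ j) q)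
  exact (summable_one_div_natCast_add_one_sub_rpow hq hγ).tsum_pos (fun j => (hterm j).le) 0
    (hterm 0)

end RealPowers

section PairedSeries

variable {p r γ : ℝ}

lemma abs_rpow_neg_pair_le (hp : 0 ≤ p) (hr : r < 1) (hγ : |γ| ≤ r) (j : ℕ) :
    |((j : ℝ) + 1 + γ) ^ (-p) - ((j : ℝ) + 1 - γ) ^ (-p)| ≤
      2 * p * (1 / ((j : ℝ) + 1 - r) ^ (1 + p)) * |γ| := by
  obtain ⟨hγ_lower, hγ_upper⟩ := abs_le.1 hγ
  have hmvt := abs_rpow_neg_sub_rpow_neg_le hp (natCast_add_one_sub_pos hr j)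
    (x := (j : ℝ) + 1 + γ) (y := (j : ℝ) + 1 - γ) (by linarith) (by linarith)
  have hdist : |(j : ℝ) + 1 + γ - ((j : ℝ) + 1 - γ)| = 2 * |γ| := by
    rw [add_sub_sub_cancel, ← two_mul, abs_mul, abs_two]
  rw [hdist] at hmvt
  linarith

lemma hasSum_rpow_neg_pair_bound (hp : 0 < p) (hr : r < 1) (γ : ℝ) :
    HasSum (fun j : ℕ => 2 * p * (1 / ((j : ℝ) + 1 - r) ^ (1 + p)) * |γ|)
      (2 * p * (∑' j : ℕ, 1 / ((j : ℝ) + 1 - r) ^ (1 + p)) * |γ|) :=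
  ((summable_one_div_natCast_add_one_sub_rpow (by linarith) hr).hasSum.mul_left _).mul_right _

lemma summable_abs_rpow_neg_pair (hp : 0 < p) (hγ : |γ| < 1) :
    Summable fun j : ℕ => |((j : ℝ) + 1 + γ) ^ (-p) - ((j : ℝ) + 1 - γ) ^ (-p)| :=
  (hasSum_rpow_neg_pair_bound hp hγ γ).summable.of_nonneg_of_le (fun _ => abs_nonneg _)
    (abs_rpow_neg_pair_le hp.le hγ le_rfl)

lemma abs_tsum_rpow_neg_pair_le (hp : 0 < p) (hr : r < 1) (hγ : |γ| ≤ r) :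
    |∑' j : ℕ, (((j : ℝ) + 1 + γ) ^ (-p) - ((j : ℝ) + 1 - γ) ^ (-p))| ≤
      2 * p * (∑' j : ℕ, 1 / ((j : ℝ) + 1 - r) ^ (1 + p)) * |γ| := by
  rw [← Real.norm_eq_abs (∑' _, _)]
  exact tsum_of_norm_bounded (hasSum_rpow_neg_pair_bound hp hr γ)
    (abs_rpow_neg_pair_le hp.le hr hγ)

end PairedSeries

section LatticeSums

variable {p q γ : ℝ} (i₀ : ℤ)

lemma add_sub_intCast_sub_one_sub (γ : ℝ) (j : ℕ) :
    (i₀ : ℝ) + γ - ((i₀ - 1 - j : ℤ) : ℝ) = (j : ℝ) + 1 + γ := by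
  push_cast
  ring

lemma add_sub_intCast_add_one_add (γ : ℝ) (j : ℕ) :
    (i₀ : ℝ) + γ - ((i₀ + 1 + j : ℤ) : ℝ) = -((j : ℝ) + 1 - γ) := by
  push_cast
  ring

lemma tendsto_sum_Icc_erase_div_abs_rpow (hp : 0 < p) (hγ : |γ| < 1) :
    Tendsto (fun n : ℕ => ∑ i ∈ (Finset.Icc (-(n : ℤ)) n).erase i₀,
        ((i₀ : ℝ) + γ - i) / |(i₀ : ℝ) + γ - i| ^ (1 + p))
      atTop (nhds (∑' j : ℕ, (((j : ℝ) + 1 + γ) ^ (-p) - ((j : ℝ) + 1 - γ) ^ (-p)))) := by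
  obtain ⟨hγ_lower, hγ_upper⟩ := abs_lt.1 hγ
  have hleft (j : ℕ) : ((i₀ : ℝ) + γ - ((i₀ - 1 - j : ℤ) : ℝ)) /
      |(i₀ : ℝ) + γ - ((i₀ - 1 - j : ℤ) : ℝ)| ^ (1 + p) = ((j : ℝ) + 1 + γ) ^ (-p) := by
    rw [add_sub_intCast_sub_one_sub, div_abs_rpow_one_add (natCast_add_one_add_pos hγ_lower j)]
  have hright (j : ℕ) : ((i₀ : ℝ) + γ - ((i₀ + 1 + j : ℤ) : ℝ)) /
      |(i₀ : ℝ) + γ - ((i₀ + 1 + j : ℤ) : ℝ)| ^ (1 + p) = -((j : ℝ) + 1 - γ) ^ (-p) := by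
    rw [add_sub_intCast_add_one_add, abs_neg, neg_div,
      div_abs_rpow_one_add (natCast_add_one_sub_pos hγ_upper j)]
  apply tendsto_sum_Icc_erase
  · simpa only [hleft] using tendsto_natCast_add_one_add_rpow_neg hp γ
  · simpa only [hright, neg_zero, ← sub_eq_add_neg] using
      (tendsto_natCast_add_one_add_rpow_neg hp (-γ)).neg
  · simpa only [hleft, hright, ← sub_eq_add_neg] using
      (summable_abs_rpow_neg_pair hp hγ).of_abs.hasSum.tendsto_sum_nat

lemma tendsto_sum_Icc_left_one_div_abs_rpow (hq : 1 < q) (hγ : -1 < γ) :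
    Tendsto (fun n : ℕ => ∑ i ∈ Finset.Icc (-(n : ℤ)) (i₀ - 1), 1 / |(i₀ : ℝ) + γ - i| ^ q)
      atTop (nhds (∑' j : ℕ, 1 / ((j : ℝ) + 1 + γ) ^ q)) := by
  apply tendsto_sum_Icc_neg_natCast
  simpa only [add_sub_intCast_sub_one_sub, abs_of_pos (natCast_add_one_add_pos hγ _)] using
    (summable_one_div_natCast_add_one_add_rpow hq hγ).hasSum.tendsto_sum_nat

lemma tendsto_sum_Icc_right_one_div_abs_rpow (hq : 1 < q) (hγ : γ < 1) :
    Tendsto (fun n : ℕ => ∑ i ∈ Finset.Icc (i₀ + 1) (n : ℤ), 1 / |(i₀ : ℝ) + γ - i| ^ q)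
      atTop (nhds (∑' j : ℕ, 1 / ((j : ℝ) + 1 - γ) ^ q)) := by
  apply tendsto_sum_Icc_natCast
  simpa only [add_sub_intCast_add_one_add, abs_neg, abs_of_pos (natCast_add_one_sub_pos hγ _)] using
    (summable_one_div_natCast_add_one_sub_rpow hq hγ).hasSum.tendsto_sum_nat

end LatticeSums

theorem claim1_series_limits_general {s r : ℝ} (hs : 0 < s) (hr : r < 1) :
    ∃ C > (0:ℝ), ∀ (i₀ : ℤ) (γ : ℝ), |γ| ≤ r →
      ∀ x : ℝ, x = (i₀ : ℝ) + γ →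
      (Summable (fun i : ℕ =>
          |((i:ℝ) + 1 + γ) ^ (-(2*s)) - ((i:ℝ) + 1 - γ) ^ (-(2*s))|) ∧
        Tendsto (fun n : ℕ =>
            ∑ i ∈ (Finset.Icc (-(n:ℤ)) (n:ℤ)).erase i₀,
              (x - (i:ℝ)) / |x - (i:ℝ)| ^ (1 + 2*s))
          atTop
          (nhds (∑' i : ℕ, (((i:ℝ) + 1 + γ) ^ (-(2*s)) - ((i:ℝ) + 1 - γ) ^ (-(2*s))))) ∧
        |∑' i : ℕ, (((i:ℝ) + 1 + γ) ^ (-(2*s)) - ((i:ℝ) + 1 - γ) ^ (-(2*s)))| ≤ C * |γ|) ∧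
      Tendsto (fun n : ℕ =>
          ∑ i ∈ Finset.Icc (-(n:ℤ)) (i₀ - 1), 1 / |x - (i:ℝ)| ^ (1 + 2*s))
        atTop (nhds (∑' i : ℕ, 1 / ((i:ℝ) + 1 + γ) ^ (1 + 2*s))) ∧
      Tendsto (fun n : ℕ =>
          ∑ i ∈ Finset.Icc (i₀ + 1) (n:ℤ), 1 / |x - (i:ℝ)| ^ (1 + 2*s))
        atTop (nhds (∑' i : ℕ, 1 / ((i:ℝ) + 1 - γ) ^ (1 + 2*s))) := by
  have hp : 0 < 2 * s := by positivity
  have hq : 1 < 1 + 2 * s := by linarith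
  have hC := tsum_one_div_natCast_add_one_sub_rpow_pos hq hr
  refine ⟨2 * (2 * s) * ∑' j : ℕ, 1 / ((j : ℝ) + 1 - r) ^ (1 + 2 * s), by positivity, ?_⟩
  rintro i₀ γ hγ x rfl
  have hγ_lt : |γ| < 1 := hγ.trans_lt hr
  obtain ⟨hγ_lower, hγ_upper⟩ := abs_lt.1 hγ_lt
  exact ⟨⟨summable_abs_rpow_neg_pair hp hγ_lt, tendsto_sum_Icc_erase_div_abs_rpow i₀ hp hγ_lt,
      abs_tsum_rpow_neg_pair_le hp hr hγ⟩,
    tendsto_sum_Icc_left_one_div_abs_rpow i₀ hq hγ_lower,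
    tendsto_sum_Icc_right_one_div_abs_rpow i₀ hq hγ_upper⟩

/-- **Claim 1 (series limits).** Let `s ∈ (0,1)`, `i₀ ∈ ℤ`, `γ ∈ (−1/2,1/2]`, `x = i₀ + γ`.
Then: (a) `Σ_{i=−n, i≠i₀}^n (x−i)/|x−i|^{1+2s}` converges as `n → ∞` to the absolutely
convergent series `Σ_{i≥1} ((i+γ)^{−2s} − (i−γ)^{−2s})`, whose absolute value is at most
`C|γ|` with `C = C(s)`; (b) `Σ_{i=−n}^{i₀−1} 1/|x−i|^{1+2s} → Σ_{i≥1} 1/(i+γ)^{1+2s}`;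
(c) `Σ_{i=i₀+1}^{n} 1/|x−i|^{1+2s} → Σ_{i≥1} 1/(i−γ)^{1+2s}`. -/
theorem claim1_series_limits (s : ℝ) (hs : s ∈ Set.Ioo (0:ℝ) 1) :
    ∃ C > (0:ℝ), ∀ (i₀ : ℤ) (γ : ℝ), γ ∈ Set.Ioc (-(1/2) : ℝ) (1/2) →
      ∀ x : ℝ, x = (i₀ : ℝ) + γ →
      -- (a)
      (Summable (fun i : ℕ =>
          |((i:ℝ) + 1 + γ) ^ (-(2*s)) - ((i:ℝ) + 1 - γ) ^ (-(2*s))|) ∧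
        Tendsto (fun n : ℕ =>
            ∑ i ∈ (Finset.Icc (-(n:ℤ)) (n:ℤ)).erase i₀,
              (x - (i:ℝ)) / |x - (i:ℝ)| ^ (1 + 2*s))
          atTop
          (nhds (∑' i : ℕ, (((i:ℝ) + 1 + γ) ^ (-(2*s)) - ((i:ℝ) + 1 - γ) ^ (-(2*s))))) ∧
        |∑' i : ℕ, (((i:ℝ) + 1 + γ) ^ (-(2*s)) - ((i:ℝ) + 1 - γ) ^ (-(2*s)))| ≤ C * |γ|) ∧
      -- (b)
      Tendsto (fun n : ℕ =>
          ∑ i ∈ Finset.Icc (-(n:ℤ)) (i₀ - 1), 1 / |x - (i:ℝ)| ^ (1 + 2*s))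
        atTop (nhds (∑' i : ℕ, 1 / ((i:ℝ) + 1 + γ) ^ (1 + 2*s))) ∧
      -- (c)
      Tendsto (fun n : ℕ =>
          ∑ i ∈ Finset.Icc (i₀ + 1) (n:ℤ), 1 / |x - (i:ℝ)| ^ (1 + 2*s))
        atTop (nhds (∑' i : ℕ, 1 / ((i:ℝ) + 1 - γ) ^ (1 + 2*s))) := by
  obtain ⟨C, hC, h⟩ := claim1_series_limits_general hs.1 one_half_lt_one
  exact ⟨C, hC, fun i₀ γ hγ => h i₀ γ (abs_le.2 ⟨hγ.1.le, hγ.2⟩)⟩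
end

section
/- Claim 2, second estimate. Let s ∈ (0,1), p₀ ≠ 0 and δ > 0 with 1/(δ|p₀|) ≥ 2, set R := 1/(2δ|p₀|), and let τ : ℝ → [0,1] be a smooth function with τ = 1 on [−R,R] and τ = 0 outside [−2R,2R]. Let i₀ ∈ ℤ, γ ∈ (−1/2,1/2], x = i₀ + γ, and x_i := (x−i)/(δ|p₀|). Then for every n, Σ over i ∈ {−n,…,n} with i ∉ {i₀−1, i₀, i₀+1} of |I[τ](x_i)| is at most C δ^{2s}, where I[τ](x_i) = C(1,s) ∫_ℝ τ(y)/|x_i − y|^{1+2s} dy (note τ(x_i) = 0 for such i, so this equals −(−Δ)^sτ(x_i)), and C is independent of x, γ, δ and n. -/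
/-!
Write `a = δ|p₀|`. On the support of `τ`, contained in `[-1/a, 1/a]`, the kernel at
`x_i = (x - i)/a` is comparable to `|x_i|^{-(1+2s)}` as soon as `|x - i| ≥ r` for a fixed `r > 1`,
because then `|x_i - y| ≥ (1 - 1/r)|x_i|`. Hence the `i`-th integral is
`O(a^{1+2s} |x - i|^{-(1+2s)} ‖τ‖₁)`, where `‖τ‖₁ ≤ 2/a` turns `a^{1+2s}` into `a^{2s}`. The sum
over `i` is finite uniformly in `x` since rounding `x` to an integer at most doubles `|x - i|`.
Discarding `i₀` and its two neighbours leaves `|x - i| ≥ 3/2`.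
-/

open MeasureTheory Filter Metric Set

section Kernel

variable {α E : Type*} [MeasurableSpace α] {μ : Measure α} [NormedAddCommGroup E]

lemma integrable_of_norm_le_of_support_subset {f : α → E} {M : ℝ} {S : Set α}
    (hf : AEStronglyMeasurable f μ) (hM : ∀ y, ‖f y‖ ≤ M) (hS : Function.support f ⊆ S)
    (hμS : μ S ≠ ⊤) : Integrable f μ :=
  (integrableOn_iff_integrable_of_support_subset hS).1
    (Measure.integrableOn_of_bounded hμS hf (ae_of_all _ hM))

lemma integral_norm_le_of_support_subset {f : α → E} {M : ℝ} {S : Set α}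
    (hM : ∀ y, ‖f y‖ ≤ M) (hS : Function.support f ⊆ S) (hμS : μ S ≠ ⊤) :
    ∫ y, ‖f y‖ ∂μ ≤ M * μ.real S := by
  have hzero : ∀ y ∉ S, ‖f y‖ = 0 := fun y hy =>
    norm_eq_zero.2 (Function.notMem_support.1 fun h => hy (hS h))
  rw [← setIntegral_eq_integral_of_forall_compl_eq_zero hzero]
  exact (le_abs_self _).trans <|
    norm_setIntegral_le_of_norm_le_const hμS.lt_top fun y _ => (norm_norm (f y)).trans_le (hM y)

lemma abs_integral_div_rpow_le {f g : α → ℝ} {d q : ℝ} (hf : Integrable f μ) (hd : 0 < d)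
    (hq : 0 ≤ q) (hg : ∀ y ∈ Function.support f, d ≤ g y) :
    |∫ y, f y / g y ^ q ∂μ| ≤ (∫ y, |f y| ∂μ) / d ^ q := by
  rw [← integral_div, ← Real.norm_eq_abs]
  refine norm_integral_le_of_norm_le (hf.abs.div_const _) (ae_of_all _ fun y => ?_)
  by_cases hy : f y = 0
  · simp [hy]
  · have hdg : d ≤ g y := hg y hy
    rw [norm_div, Real.norm_eq_abs, Real.norm_of_nonneg (Real.rpow_nonneg (hd.le.trans hdg) q)]
    gcongr

lemma abs_integral_div_norm_sub_rpow_le [MeasurableSpace E] {μ : Measure E} {f : E → ℝ} {x : E}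
    {θ q : ℝ} (hf : Integrable f μ) (hx : x ≠ 0) (hθ : θ < 1) (hq : 0 ≤ q)
    (hsupp : Function.support f ⊆ closedBall 0 (θ * ‖x‖)) :
    |∫ y, f y / ‖x - y‖ ^ q ∂μ| ≤ (∫ y, |f y| ∂μ) / ((1 - θ) * ‖x‖) ^ q := by
  refine abs_integral_div_rpow_le hf (mul_pos (sub_pos.2 hθ) (norm_pos_iff.2 hx)) hq
    fun y hy => ?_
  have hy' : ‖y‖ ≤ θ * ‖x‖ := mem_closedBall_zero_iff.1 (hsupp hy)
  linarith [norm_sub_norm_le x y]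

end Kernel

section Lattice

variable {q : ℝ} {x : ℝ} {A : Finset ℤ}

lemma abs_sub_intCast_rpow_neg_le {i : ℤ} (hq : 0 ≤ q) (hi : 1 / 2 < |x - i|) :
    |x - i| ^ (-q) ≤ 2 ^ q * |((round x - i : ℤ) : ℝ)| ^ (-q) := by
  have hround : |x - round x| ≤ 1 / 2 := abs_sub_round x
  have hpos : 0 < |((round x - i : ℤ) : ℝ)| := by
    push_cast
    linarith [abs_sub_le x (round x) i]
  have hle : |((round x - i : ℤ) : ℝ)| / 2 ≤ |x - i| := by
    push_cast
    linarith [abs_sub_le (round x : ℝ) x i, abs_sub_comm (round x : ℝ) x]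
  calc |x - i| ^ (-q) ≤ (|((round x - i : ℤ) : ℝ)| / 2) ^ (-q) :=
        Real.rpow_le_rpow_of_nonpos (half_pos hpos) hle (neg_nonpos.2 hq)
    _ = 2 ^ q * |((round x - i : ℤ) : ℝ)| ^ (-q) := by
        rw [Real.div_rpow hpos.le zero_le_two, Real.rpow_neg zero_le_two, div_inv_eq_mul, mul_comm]

lemma sum_abs_sub_intCast_rpow_neg_le (hq : 1 < q) (hA : ∀ i ∈ A, 1 / 2 < |x - i|) :
    ∑ i ∈ A, |x - i| ^ (-q) ≤ 2 ^ q * ∑' k : ℤ, |(k : ℝ)| ^ (-q) := by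
  have hsum : Summable fun i : ℤ => |((round x - i : ℤ) : ℝ)| ^ (-q) :=
    (Equiv.subLeft (round x)).summable_iff.2 (Real.summable_abs_int_rpow hq)
  calc ∑ i ∈ A, |x - i| ^ (-q)
      ≤ ∑ i ∈ A, 2 ^ q * |((round x - i : ℤ) : ℝ)| ^ (-q) :=
        Finset.sum_le_sum fun i hi => abs_sub_intCast_rpow_neg_le (by linarith) (hA i hi)
    _ = 2 ^ q * ∑ i ∈ A, |((round x - i : ℤ) : ℝ)| ^ (-q) := (Finset.mul_sum ..).symm
    _ ≤ 2 ^ q * ∑' i : ℤ, |((round x - i : ℤ) : ℝ)| ^ (-q) := by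
        gcongr
        exact hsum.sum_le_tsum _ fun i _ => by positivity
    _ = 2 ^ q * ∑' k : ℤ, |(k : ℝ)| ^ (-q) := by
        congr 1
        exact (Equiv.subLeft (round x)).tsum_eq fun k : ℤ => |(k : ℝ)| ^ (-q)

lemma three_halves_le_abs_sub_intCast {i₀ i : ℤ} {γ : ℝ} (hγ : |γ| ≤ 1 / 2)
    (hi : i ≠ i₀ - 1 ∧ i ≠ i₀ ∧ i ≠ i₀ + 1) : 3 / 2 ≤ |(i₀ + γ : ℝ) - i| := by
  have hint : (2 : ℤ) ≤ |i₀ - i| := by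
    rw [le_abs]
    omega
  have hreal : (2 : ℝ) ≤ |(i₀ : ℝ) - i| := by exact_mod_cast hint
  have htri : |(i₀ : ℝ) - i| ≤ |(i₀ + γ : ℝ) - i| + |γ| := by
    calc |(i₀ : ℝ) - i| = |(i₀ + γ : ℝ) - i - γ| := by ring_nf
      _ ≤ |(i₀ + γ : ℝ) - i| + |γ| := abs_sub _ _
  linarith

end Lattice

section LatticePotential

variable {a r q x : ℝ} {f : ℝ → ℝ} {A : Finset ℤ}

lemma abs_integral_div_abs_div_sub_rpow_le (ha : 0 < a) (hr : 1 < r) (hq : 0 ≤ q)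
    (hx : r ≤ |x|) (hf : Integrable f) (hsupp : Function.support f ⊆ closedBall 0 (1 / a)) :
    |∫ y, f y / |x / a - y| ^ q| ≤ (a / (1 - r⁻¹)) ^ q * (∫ y, |f y|) * |x| ^ (-q) := by
  have hr0 : 0 < r := one_pos.trans hr
  have hx0 : 0 < |x| := hr0.trans_le hx
  have hθ : 0 < 1 - r⁻¹ := sub_pos.2 (inv_lt_one_of_one_lt₀ hr)
  have hnorm : ‖x / a‖ = |x| / a := by rw [norm_div, Real.norm_eq_abs, Real.norm_of_nonneg ha.le]
  have hball : 1 / a ≤ r⁻¹ * ‖x / a‖ := by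
    rw [hnorm, ← mul_div_assoc]
    gcongr
    rwa [← div_eq_inv_mul, one_le_div hr0]
  calc |∫ y, f y / |x / a - y| ^ q|
      ≤ (∫ y, |f y|) / ((1 - r⁻¹) * ‖x / a‖) ^ q :=
        abs_integral_div_norm_sub_rpow_le hf (div_ne_zero (abs_pos.1 hx0) ha.ne') (by linarith) hq
          (hsupp.trans (closedBall_subset_closedBall hball))
    _ = (a / (1 - r⁻¹)) ^ q * (∫ y, |f y|) * |x| ^ (-q) := by
        have hscale : (1 - r⁻¹) * ‖x / a‖ = |x| / (a / (1 - r⁻¹)) := by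
          rw [hnorm]
          field_simp
        rw [hscale, Real.div_rpow hx0.le (by positivity), Real.rpow_neg hx0.le, div_div_eq_mul_div,
          div_eq_mul_inv, mul_comm (∫ y, |f y|)]

lemma sum_abs_integral_div_abs_div_sub_rpow_le (ha : 0 < a) (hr : 1 < r) (hq : 1 < q)
    (hA : ∀ i ∈ A, r ≤ |x - i|) (hf : Integrable f)
    (hsupp : Function.support f ⊆ closedBall 0 (1 / a)) :
    ∑ i ∈ A, |∫ y, f y / |(x - i) / a - y| ^ q|
      ≤ (a / (1 - r⁻¹)) ^ q * (∫ y, |f y|) * (2 ^ q * ∑' k : ℤ, |(k : ℝ)| ^ (-q)) := by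
  have hθ : 0 < 1 - r⁻¹ := sub_pos.2 (inv_lt_one_of_one_lt₀ hr)
  calc ∑ i ∈ A, |∫ y, f y / |(x - i) / a - y| ^ q|
      ≤ ∑ i ∈ A, (a / (1 - r⁻¹)) ^ q * (∫ y, |f y|) * |x - i| ^ (-q) :=
        Finset.sum_le_sum fun i hi =>
          abs_integral_div_abs_div_sub_rpow_le ha hr (by linarith) (hA i hi) hf hsupp
    _ = (a / (1 - r⁻¹)) ^ q * (∫ y, |f y|) * ∑ i ∈ A, |x - i| ^ (-q) := (Finset.mul_sum ..).symm
    _ ≤ _ := by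
        gcongr
        exact sum_abs_sub_intCast_rpow_neg_le hq fun i hi => by linarith [hA i hi]

lemma sum_abs_integral_div_abs_div_sub_rpow_le_of_abs_le_one {s : ℝ} (hs : 0 < s) (ha : 0 < a)
    (hr : 1 < r) (hA : ∀ i ∈ A, r ≤ |x - i|) (hf : AEStronglyMeasurable f) (hf1 : ∀ y, |f y| ≤ 1)
    (hsupp : Function.support f ⊆ closedBall 0 (1 / a)) :
    ∑ i ∈ A, |∫ y, f y / |(x - i) / a - y| ^ (1 + 2 * s)|
      ≤ 2 * (2 / (1 - r⁻¹)) ^ (1 + 2 * s) * (∑' k : ℤ, |(k : ℝ)| ^ (-(1 + 2 * s))) *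
        a ^ (2 * s) := by
  have hθ : 0 < 1 - r⁻¹ := sub_pos.2 (inv_lt_one_of_one_lt₀ hr)
  have hfin : volume (closedBall (0 : ℝ) (1 / a)) ≠ ⊤ := measure_closedBall_lt_top.ne
  have hL1 : ∫ y, |f y| ≤ 2 / a :=
    calc ∫ y, |f y| ≤ 1 * volume.real (closedBall (0 : ℝ) (1 / a)) :=
          integral_norm_le_of_support_subset hf1 hsupp hfin
      _ = 2 / a := by rw [Real.volume_real_closedBall (by positivity)]; ring
  calc ∑ i ∈ A, |∫ y, f y / |(x - i) / a - y| ^ (1 + 2 * s)|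
      ≤ (a / (1 - r⁻¹)) ^ (1 + 2 * s) * (∫ y, |f y|) *
          (2 ^ (1 + 2 * s) * ∑' k : ℤ, |(k : ℝ)| ^ (-(1 + 2 * s))) :=
        sum_abs_integral_div_abs_div_sub_rpow_le ha hr (by linarith) hA
          (integrable_of_norm_le_of_support_subset hf hf1 hsupp hfin) hsupp
    _ ≤ (a / (1 - r⁻¹)) ^ (1 + 2 * s) * (2 / a) *
          (2 ^ (1 + 2 * s) * ∑' k : ℤ, |(k : ℝ)| ^ (-(1 + 2 * s))) := by gcongr
    _ = _ := by
        rw [Real.div_rpow ha.le hθ.le, Real.div_rpow zero_le_two hθ.le, Real.rpow_one_add' ha.le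
          (by linarith)]
        field_simp

end LatticePotential

namespace IsCutoff

variable {R : ℝ} {τ : ℝ → ℝ}

lemma abs_le_one (hτ : IsCutoff R τ) (y : ℝ) : |τ y| ≤ 1 :=
  abs_le.2 ⟨by linarith [(hτ.2.1 y).1], (hτ.2.1 y).2⟩

lemma support_subset_closedBall (hτ : IsCutoff R τ) :
    Function.support τ ⊆ closedBall 0 (2 * R) := fun y hy =>
  mem_closedBall_zero_iff.2 (le_of_not_ge fun hRy => hy (hτ.2.2.2 y hRy))

end IsCutoff

/-- An arbitrary factor `c` stands for `C1s s`, which is a junk value at integers `s ≥ 1`, where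
`Real.Gamma` has a pole at `-s`. -/
theorem claim2_second_estimate_general {s r : ℝ} (hs : 0 < s) (hr : 1 < r) (c : ℝ) :
    ∃ C > (0 : ℝ), ∀ p₀ δ : ℝ, p₀ ≠ 0 → 0 < δ →
      ∀ τ : ℝ → ℝ, AEStronglyMeasurable τ → (∀ y, |τ y| ≤ 1) →
      Function.support τ ⊆ closedBall 0 (1 / (δ * |p₀|)) →
      ∀ (x : ℝ) (A : Finset ℤ), (∀ i ∈ A, r ≤ |x - i|) →
        ∑ i ∈ A, |c * ∫ y : ℝ, τ y / |(x - (i : ℝ)) / (δ * |p₀|) - y| ^ (1 + 2 * s)|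
          ≤ C * |p₀| ^ (2 * s) * δ ^ (2 * s) := by
  have hθ : 0 < 1 - r⁻¹ := sub_pos.2 (inv_lt_one_of_one_lt₀ hr)
  set K : ℝ := 2 * (2 / (1 - r⁻¹)) ^ (1 + 2 * s) * ∑' k : ℤ, |(k : ℝ)| ^ (-(1 + 2 * s))
  have hK : 0 ≤ K := mul_nonneg (by positivity) (tsum_nonneg fun k => by positivity)
  -- The summand `1` makes the constant positive even if `c = 0`.
  refine ⟨|c| * K + 1, add_pos_of_nonneg_of_pos (mul_nonneg (abs_nonneg c) hK) one_pos,
    fun p₀ δ hp₀ hδ τ hτ hτ1 hsupp x A hA => ?_⟩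
  have hp : 0 < |p₀| := abs_pos.2 hp₀
  simp only [abs_mul, ← Finset.mul_sum]
  calc |c| * ∑ i ∈ A, |∫ y : ℝ, τ y / |(x - (i : ℝ)) / (δ * |p₀|) - y| ^ (1 + 2 * s)|
      ≤ |c| * (K * (δ * |p₀|) ^ (2 * s)) := by
        gcongr
        exact sum_abs_integral_div_abs_div_sub_rpow_le_of_abs_le_one hs (by positivity) hr hA hτ
          hτ1 hsupp
    _ = |c| * K * |p₀| ^ (2 * s) * δ ^ (2 * s) := by
        rw [Real.mul_rpow hδ.le hp.le]
        ring
    _ ≤ (|c| * K + 1) * |p₀| ^ (2 * s) * δ ^ (2 * s) := by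
        gcongr
        exact (lt_add_one _).le

/-- **Claim 2, second estimate.** For `s ∈ (0,1)`, `p₀ ≠ 0`, `1/(δ|p₀|) ≥ 2`,
`R = 1/(2δ|p₀|)`, and `τ` a smooth cutoff (`τ = 1` on `[−R,R]`, `τ = 0` outside
`[−2R,2R]`), with `x_i = (x−i)/(δ|p₀|)`: for every `n`,
`Σ_{i=−n, i∉{i₀−1,i₀,i₀+1}}^n |I[τ](x_i)| ≤ C δ^{2s}`, where
`I[τ](x_i) = C(1,s) ∫ τ(y)/|x_i − y|^{1+2s} dy` and `C` is independent of `x, γ, δ, n`. -/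
theorem claim2_second_estimate
    (s : ℝ) (hs : s ∈ Set.Ioo (0:ℝ) 1) (p₀ : ℝ) (hp₀ : p₀ ≠ 0) :
    ∃ C > (0:ℝ), ∀ δ : ℝ, 0 < δ → 2 ≤ 1 / (δ * |p₀|) →
      ∀ τc : ℝ → ℝ, IsCutoff (1 / (2 * δ * |p₀|)) τc →
      ∀ (i₀ : ℤ) (γ : ℝ), γ ∈ Set.Ioc (-(1/2) : ℝ) (1/2) →
      ∀ x : ℝ, x = (i₀ : ℝ) + γ →
      ∀ n : ℕ,
        (∑ i ∈ (Finset.Icc (-(n:ℤ)) (n:ℤ)).filter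
            (fun i => i ≠ i₀ - 1 ∧ i ≠ i₀ ∧ i ≠ i₀ + 1),
          |C1s s * ∫ y : ℝ, τc y / |(x - (i:ℝ)) / (δ * |p₀|) - y| ^ (1 + 2*s)|)
        ≤ C * δ ^ (2*s) := by
  obtain ⟨C, hC, hbound⟩ :=
    claim2_second_estimate_general hs.1 (r := 3 / 2) (by norm_num) (C1s s)
  refine ⟨C * |p₀| ^ (2 * s), by positivity, fun δ hδ _ τc hτ i₀ γ hγ x hx n => ?_⟩
  exact hbound p₀ δ hp₀ hδ τc hτ.1.continuous.aestronglyMeasurable hτ.abs_le_one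
    (hτ.support_subset_closedBall.trans_eq (by congr 1; field_simp)) x _ fun i hi =>
      hx ▸ three_halves_le_abs_sub_intCast (abs_le.2 ⟨hγ.1.le, hγ.2⟩) (Finset.mem_filter.1 hi).2
end
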